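/- arXiv:1601.07979 — 3 statements merged into one kernel-verified Lean document; each statement's English description precedes it below -/
import Mathlib

section
/- Let (B, α_B) and (H, α_H) be Hom-bialgebras over a field k and let φ : B⊗H → H⊗B be a linear map with φ∘(α_B⊗α_H) = (α_H⊗α_B)∘φ, written φ(b⊗h) = Σ h^φ ⊗ b^φ. Equip B⊗H with the comultiplication Δ_{B⊗H}(b⊗h) = Σ (b₁ ⊗ (h₁)^φ) ⊗ ((b₂)^φ ⊗ h₂) (φ applied to b₂⊗h₁), counit ε_{B⊗H}(b⊗h) = ε_B(b)ε_H(h), componentwise product (a⊗h)(b⊗g) = ab ⊗ hg, unit 1_B⊗1_H, and structure map α_B⊗α_H. Then φ is a monoidal Hom-cotwistor if and only if B⊗H with these structures is a Hom-bialgebra over k. -/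
open TensorProduct BigOperators

noncomputable section

variable (k : Type*) [Field k]

section HomDefs

variable {A B C H U X Y Z : Type*}
variable [AddCommGroup A] [Module k A] [AddCommGroup B] [Module k B]
variable [AddCommGroup C] [Module k C] [AddCommGroup H] [Module k H]
variable [AddCommGroup U] [Module k U] [AddCommGroup X] [Module k X]
variable [AddCommGroup Y] [Module k Y] [AddCommGroup Z] [Module k Z]

/-- A Hom-algebra `(A, α, μ, e)` over `k`. -/
def IsHomAlgebra (α : A ≃ₗ[k] A) (μ : A →ₗ[k] A →ₗ[k] A) (e : A) : Prop :=
  (∀ a b, α (μ a b) = μ (α a) (α b)) ∧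
  (∀ a b c, μ (α a) (μ b c) = μ (μ a b) (α c)) ∧
  α e = e ∧ (∀ a, μ e a = α a) ∧ (∀ a, μ a e = α a)

/-- A Hom-coalgebra `(C, α, Δ, ε)` over `k`. -/
def IsHomCoalgebra (α : C ≃ₗ[k] C) (Δ : C →ₗ[k] C ⊗[k] C) (ε : C →ₗ[k] k) : Prop :=
  (∀ c, Δ (α c) = TensorProduct.map α.toLinearMap α.toLinearMap (Δ c)) ∧
  (∀ c, ε (α c) = ε c) ∧
  (∀ c, TensorProduct.map α.toLinearMap Δ (Δ c)
      = TensorProduct.assoc k C C C (TensorProduct.map Δ α.toLinearMap (Δ c))) ∧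
  (∀ c, TensorProduct.lid k C (TensorProduct.map ε (LinearMap.id : C →ₗ[k] C) (Δ c)) = α c) ∧
  (∀ c, TensorProduct.rid k C (TensorProduct.map (LinearMap.id : C →ₗ[k] C) ε (Δ c)) = α c)

/-- A Hom-bialgebra `(H, α, μ, e, Δ, ε)` over `k`. -/
def IsHomBialgebra (α : H ≃ₗ[k] H) (μ : H →ₗ[k] H →ₗ[k] H) (e : H)
    (Δ : H →ₗ[k] H ⊗[k] H) (ε : H →ₗ[k] k) : Prop :=
  IsHomAlgebra k α μ e ∧ IsHomCoalgebra k α Δ ε ∧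
  (∀ a b, Δ (μ a b) = TensorProduct.map (TensorProduct.lift μ) (TensorProduct.lift μ)
      (TensorProduct.tensorTensorTensorComm k H H H H (Δ a ⊗ₜ[k] Δ b))) ∧
  Δ e = e ⊗ₜ[k] e ∧
  (∀ a b, ε (μ a b) = ε a * ε b) ∧
  ε e = 1

/-- A right `A`-Hom-module `(U, αU, act)`. -/
def IsHomModule (αA : A ≃ₗ[k] A) (μ : A →ₗ[k] A →ₗ[k] A) (e : A)
    (αU : U ≃ₗ[k] U) (act : U →ₗ[k] A →ₗ[k] U) : Prop :=
  (∀ u a, αU (act u a) = act (αU u) (αA a)) ∧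
  (∀ u, act u e = αU u) ∧
  (∀ u a b, act (act u a) (αA b) = act (αU u) (μ a b))

/-- A right `H`-Hom-comodule `(U, αU, ρ)`. -/
def IsHomComodule (αH : H ≃ₗ[k] H) (Δ : H →ₗ[k] H ⊗[k] H) (ε : H →ₗ[k] k)
    (αU : U ≃ₗ[k] U) (ρ : U →ₗ[k] U ⊗[k] H) : Prop :=
  (∀ u, ρ (αU u) = TensorProduct.map αU.toLinearMap αH.toLinearMap (ρ u)) ∧
  (∀ u, TensorProduct.map αU.toLinearMap Δ (ρ u)
      = TensorProduct.assoc k U H H (TensorProduct.map ρ αH.toLinearMap (ρ u))) ∧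
  (∀ u, TensorProduct.rid k U (TensorProduct.map (LinearMap.id : U →ₗ[k] U) ε (ρ u)) = αU u)

/-- A Hom-cotwistor `φ : B ⊗ H → H ⊗ B` between Hom-coalgebras `B` and `H`
(conditions (M1)-(M4) together with compatibility with the structure maps). -/
def IsHomCotwistor (αB : B ≃ₗ[k] B) (ΔB : B →ₗ[k] B ⊗[k] B) (εB : B →ₗ[k] k)
    (αH : H ≃ₗ[k] H) (ΔH : H →ₗ[k] H ⊗[k] H) (εH : H →ₗ[k] k)
    (φ : B ⊗[k] H →ₗ[k] H ⊗[k] B) : Prop :=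
  (φ ∘ₗ TensorProduct.map αB.toLinearMap αH.toLinearMap
     = TensorProduct.map αH.toLinearMap αB.toLinearMap ∘ₗ φ) ∧
  -- (M1)
  (TensorProduct.map αH.toLinearMap ΔB ∘ₗ φ
     = (TensorProduct.assoc k H B B).toLinearMap
       ∘ₗ TensorProduct.map φ (LinearMap.id : B →ₗ[k] B)
       ∘ₗ (TensorProduct.assoc k B H B).symm.toLinearMap
       ∘ₗ TensorProduct.map (LinearMap.id : B →ₗ[k] B) φ
       ∘ₗ (TensorProduct.assoc k B B H).toLinearMap
       ∘ₗ TensorProduct.map ΔB αH.toLinearMap) ∧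
  -- (M2)
  (TensorProduct.map ΔH αB.toLinearMap ∘ₗ φ
     = (TensorProduct.assoc k H H B).symm.toLinearMap
       ∘ₗ TensorProduct.map (LinearMap.id : H →ₗ[k] H) φ
       ∘ₗ (TensorProduct.assoc k H B H).toLinearMap
       ∘ₗ TensorProduct.map φ (LinearMap.id : H →ₗ[k] H)
       ∘ₗ (TensorProduct.assoc k B H H).symm.toLinearMap
       ∘ₗ TensorProduct.map αB.toLinearMap ΔH) ∧
  -- (M3)
  ((TensorProduct.lid k B).toLinearMap
      ∘ₗ TensorProduct.map εH (LinearMap.id : B →ₗ[k] B) ∘ₗ φ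
     = (TensorProduct.rid k B).toLinearMap
        ∘ₗ TensorProduct.map (LinearMap.id : B →ₗ[k] B) εH) ∧
  -- (M4)
  ((TensorProduct.rid k H).toLinearMap
      ∘ₗ TensorProduct.map (LinearMap.id : H →ₗ[k] H) εB ∘ₗ φ
     = (TensorProduct.lid k H).toLinearMap
        ∘ₗ TensorProduct.map εB (LinearMap.id : H →ₗ[k] H))

/-- A monoidal Hom-cotwistor between Hom-bialgebras `B` and `H`:
a Hom-cotwistor additionally satisfying (M5) and (M6). -/
def IsMonoidalHomCotwistor (αB : B ≃ₗ[k] B) (μB : B →ₗ[k] B →ₗ[k] B) (eB : B)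
    (ΔB : B →ₗ[k] B ⊗[k] B) (εB : B →ₗ[k] k)
    (αH : H ≃ₗ[k] H) (μH : H →ₗ[k] H →ₗ[k] H) (eH : H)
    (ΔH : H →ₗ[k] H ⊗[k] H) (εH : H →ₗ[k] k)
    (φ : B ⊗[k] H →ₗ[k] H ⊗[k] B) : Prop :=
  IsHomCotwistor k αB ΔB εB αH ΔH εH φ ∧
  -- (M5)
  (TensorProduct.map (TensorProduct.lift μH) (TensorProduct.lift μB)
      ∘ₗ (TensorProduct.tensorTensorTensorComm k H B H B).toLinearMap
      ∘ₗ TensorProduct.map φ φ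
    = φ ∘ₗ TensorProduct.map (TensorProduct.lift μB) (TensorProduct.lift μH)
        ∘ₗ (TensorProduct.tensorTensorTensorComm k B H B H).toLinearMap) ∧
  -- (M6)
  φ (eB ⊗ₜ[k] eH) = eH ⊗ₜ[k] eB

/-- A Hom-entwining map `Φ : H ⊗ A → A ⊗ H` (conditions (E1)-(E4) together
with compatibility with the structure maps); `(H, A, Φ)` is then a
Hom-entwining structure. -/
def IsHomEntwining (αA : A ≃ₗ[k] A) (μ : A →ₗ[k] A →ₗ[k] A) (e : A)
    (αH : H ≃ₗ[k] H) (Δ : H →ₗ[k] H ⊗[k] H) (ε : H →ₗ[k] k)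
    (Φ : H ⊗[k] A →ₗ[k] A ⊗[k] H) : Prop :=
  (TensorProduct.map αA.toLinearMap αH.toLinearMap ∘ₗ Φ
     = Φ ∘ₗ TensorProduct.map αH.toLinearMap αA.toLinearMap) ∧
  -- (E1)
  (TensorProduct.map (TensorProduct.lift μ) αH.toLinearMap
      ∘ₗ (TensorProduct.assoc k A A H).symm.toLinearMap
      ∘ₗ TensorProduct.map (LinearMap.id : A →ₗ[k] A) Φ
      ∘ₗ (TensorProduct.assoc k A H A).toLinearMap
      ∘ₗ TensorProduct.map Φ (LinearMap.id : A →ₗ[k] A)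
    = Φ ∘ₗ TensorProduct.map αH.toLinearMap (TensorProduct.lift μ)
        ∘ₗ (TensorProduct.assoc k H A A).toLinearMap) ∧
  -- (E2)
  (TensorProduct.map αA.toLinearMap Δ ∘ₗ Φ
     = (TensorProduct.assoc k A H H).toLinearMap
       ∘ₗ TensorProduct.map Φ (LinearMap.id : H →ₗ[k] H)
       ∘ₗ (TensorProduct.assoc k H A H).symm.toLinearMap
       ∘ₗ TensorProduct.map (LinearMap.id : H →ₗ[k] H) Φ
       ∘ₗ (TensorProduct.assoc k H H A).toLinearMap
       ∘ₗ TensorProduct.map Δ αA.toLinearMap) ∧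
  -- (E3)
  ((TensorProduct.rid k A).toLinearMap
      ∘ₗ TensorProduct.map (LinearMap.id : A →ₗ[k] A) ε ∘ₗ Φ
     = (TensorProduct.lid k A).toLinearMap
        ∘ₗ TensorProduct.map ε (LinearMap.id : A →ₗ[k] A)) ∧
  -- (E4)
  (∀ h, Φ (h ⊗ₜ[k] e) = e ⊗ₜ[k] h)

/-- A Hom-monoidal entwining datum between Hom-bialgebras `H` (coalgebra side)
and `A` (algebra side): a Hom-entwining map additionally satisfying (E5), (E6). -/
def IsHomMonoidalEntwining (αA : A ≃ₗ[k] A) (μA : A →ₗ[k] A →ₗ[k] A) (eA : A)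
    (ΔA : A →ₗ[k] A ⊗[k] A) (εA : A →ₗ[k] k)
    (αH : H ≃ₗ[k] H) (μH : H →ₗ[k] H →ₗ[k] H) (eH : H)
    (ΔH : H →ₗ[k] H ⊗[k] H) (εH : H →ₗ[k] k)
    (Φ : H ⊗[k] A →ₗ[k] A ⊗[k] H) : Prop :=
  IsHomEntwining k αA μA eA αH ΔH εH Φ ∧
  -- (E5)
  (TensorProduct.map (LinearMap.id : A ⊗[k] A →ₗ[k] A ⊗[k] A) (TensorProduct.lift μH)
      ∘ₗ (TensorProduct.tensorTensorTensorComm k A H A H).toLinearMap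
      ∘ₗ TensorProduct.map Φ Φ
      ∘ₗ (TensorProduct.tensorTensorTensorComm k H H A A).toLinearMap
      ∘ₗ TensorProduct.map
           (TensorProduct.map (αH.toLinearMap ∘ₗ αH.toLinearMap)
             (αH.toLinearMap ∘ₗ αH.toLinearMap)) ΔA
    = TensorProduct.map ΔA (αH.toLinearMap ∘ₗ αH.toLinearMap)
        ∘ₗ Φ ∘ₗ TensorProduct.map (TensorProduct.lift μH) (LinearMap.id : A →ₗ[k] A)) ∧
  -- (E6)
  (∀ a, TensorProduct.lid k H
      (TensorProduct.map εA (LinearMap.id : H →ₗ[k] H) (Φ (eH ⊗ₜ[k] a))) = εA a • eH)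

/-- An `n`-th Hom-entwined module over a Hom-entwining structure `(H, A, Φ)`. -/
def IsHomEntwinedModule (αA : A ≃ₗ[k] A) (μ : A →ₗ[k] A →ₗ[k] A) (e : A)
    (αH : H ≃ₗ[k] H) (Δ : H →ₗ[k] H ⊗[k] H) (ε : H →ₗ[k] k)
    (Φ : H ⊗[k] A →ₗ[k] A ⊗[k] H) (n : ℤ)
    (αU : U ≃ₗ[k] U) (act : U →ₗ[k] A →ₗ[k] U) (ρ : U →ₗ[k] U ⊗[k] H) : Prop :=
  IsHomModule k αA μ e αU act ∧
  IsHomComodule k αH Δ ε αU ρ ∧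
  ∀ u a, ρ (act u a)
    = TensorProduct.map
        (TensorProduct.lift act ∘ₗ
          TensorProduct.map (LinearMap.id : U →ₗ[k] U) αA.toLinearMap)
        ((αH ^ (-n)).toLinearMap)
        ((TensorProduct.assoc k U A H).symm
          (TensorProduct.map (LinearMap.id : U →ₗ[k] U)
            (Φ ∘ₗ TensorProduct.map ((αH ^ (n + 1)).toLinearMap)
               (LinearMap.id : A →ₗ[k] A))
            (TensorProduct.assoc k U H A (ρ u ⊗ₜ[k] a))))

/-- A Hom-Long dimodule over a Hom-bialgebra `H`. -/
def IsHomLongDimodule (αH : H ≃ₗ[k] H) (μ : H →ₗ[k] H →ₗ[k] H) (e : H)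
    (Δ : H →ₗ[k] H ⊗[k] H) (ε : H →ₗ[k] k)
    (αU : U ≃ₗ[k] U) (act : U →ₗ[k] H →ₗ[k] U) (ρ : U →ₗ[k] U ⊗[k] H) : Prop :=
  IsHomModule k αH μ e αU act ∧
  IsHomComodule k αH Δ ε αU ρ ∧
  ∀ u h, ρ (act u h)
    = TensorProduct.map (TensorProduct.lift act) αH.toLinearMap
        ((TensorProduct.assoc k U H H).symm
          (TensorProduct.map (LinearMap.id : U →ₗ[k] U)
            (TensorProduct.comm k H H).toLinearMap
            (TensorProduct.assoc k U H H (ρ u ⊗ₜ[k] αH h))))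

/-- A right `H`-comodule algebra over a Hom-bialgebra `H`. -/
def IsHomComoduleAlgebra (αH : H ≃ₗ[k] H) (μH : H →ₗ[k] H →ₗ[k] H) (eH : H)
    (ΔH : H →ₗ[k] H ⊗[k] H) (εH : H →ₗ[k] k)
    (αA : A ≃ₗ[k] A) (μA : A →ₗ[k] A →ₗ[k] A) (eA : A)
    (ρA : A →ₗ[k] A ⊗[k] H) : Prop :=
  IsHomAlgebra k αA μA eA ∧
  IsHomComodule k αH ΔH εH αA ρA ∧
  (∀ a b, ρA (μA a b) = TensorProduct.map (TensorProduct.lift μA) (TensorProduct.lift μH)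
      (TensorProduct.tensorTensorTensorComm k A H A H (ρA a ⊗ₜ[k] ρA b))) ∧
  ρA eA = eA ⊗ₜ[k] eH

/-- A right `H`-module coalgebra over a Hom-bialgebra `H`. -/
def IsHomModuleCoalgebra (αH : H ≃ₗ[k] H) (μH : H →ₗ[k] H →ₗ[k] H) (eH : H)
    (ΔH : H →ₗ[k] H ⊗[k] H) (εH : H →ₗ[k] k)
    (αC : C ≃ₗ[k] C) (ΔC : C →ₗ[k] C ⊗[k] C) (εC : C →ₗ[k] k)
    (act : C →ₗ[k] H →ₗ[k] C) : Prop :=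
  IsHomCoalgebra k αC ΔC εC ∧
  IsHomModule k αH μH eH αC act ∧
  (∀ c h, ΔC (act c h) = TensorProduct.map (TensorProduct.lift act) (TensorProduct.lift act)
      (TensorProduct.tensorTensorTensorComm k C C H H (ΔC c ⊗ₜ[k] ΔH h))) ∧
  (∀ c h, εC (act c h) = εC c * εH h)

/-- A Hom-Hopf algebra `(H, α, μ, e, Δ, ε, S)` over `k`. -/
def IsHomHopf (αH : H ≃ₗ[k] H) (μ : H →ₗ[k] H →ₗ[k] H) (e : H)
    (Δ : H →ₗ[k] H ⊗[k] H) (ε : H →ₗ[k] k) (S : H →ₗ[k] H) : Prop :=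
  IsHomBialgebra k αH μ e Δ ε ∧
  (∀ h, S (αH h) = αH (S h)) ∧
  (∀ h, TensorProduct.lift μ
      (TensorProduct.map S (LinearMap.id : H →ₗ[k] H) (Δ h)) = ε h • e) ∧
  (∀ h, TensorProduct.lift μ
      (TensorProduct.map (LinearMap.id : H →ₗ[k] H) S (Δ h)) = ε h • e)

/-- A `p`-th right-right Yetter-Drinfeld module over a Hom-Hopf algebra `H`. -/
def IsYetterDrinfeld (αH : H ≃ₗ[k] H) (μ : H →ₗ[k] H →ₗ[k] H) (e : H)
    (Δ : H →ₗ[k] H ⊗[k] H) (ε : H →ₗ[k] k) (S : H →ₗ[k] H) (p : ℤ)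
    (αU : U ≃ₗ[k] U) (act : U →ₗ[k] H →ₗ[k] U) (ρ : U →ₗ[k] U ⊗[k] H) : Prop :=
  IsHomModule k αH μ e αU act ∧
  IsHomComodule k αH Δ ε αU ρ ∧
  ∀ u h, ρ (act u h)
    = TensorProduct.map
        (TensorProduct.lift act ∘ₗ
          TensorProduct.map (LinearMap.id : U →ₗ[k] U) αH.symm.toLinearMap)
        (TensorProduct.lift μ ∘ₗ
          TensorProduct.map (S ∘ₗ (αH ^ (p - 2)).toLinearMap)
            (TensorProduct.lift μ ∘ₗ
              TensorProduct.map αH.symm.toLinearMap ((αH ^ (p - 4)).toLinearMap)))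
        (TensorProduct.tensorTensorTensorComm k U H H (H ⊗[k] H)
          (TensorProduct.map (LinearMap.id : U ⊗[k] H →ₗ[k] U ⊗[k] H)
            (TensorProduct.leftComm k H H H).toLinearMap
            (TensorProduct.tensorTensorTensorComm k U H H (H ⊗[k] H)
              (ρ u ⊗ₜ[k]
                TensorProduct.map (LinearMap.id : H →ₗ[k] H) Δ (Δ h)))))

/-- The smash coproduct comultiplication on `B ⊗ H` induced by
`φ : B ⊗ H → H ⊗ B`: `Δ(b ⊗ h) = (b₁ ⊗ (h₁)^φ) ⊗ ((b₂)^φ ⊗ h₂)`. -/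
def smashComul (φ : B ⊗[k] H →ₗ[k] H ⊗[k] B) (ΔB : B →ₗ[k] B ⊗[k] B)
    (ΔH : H →ₗ[k] H ⊗[k] H) : B ⊗[k] H →ₗ[k] (B ⊗[k] H) ⊗[k] (B ⊗[k] H) :=
  (TensorProduct.assoc k B H (B ⊗[k] H)).symm.toLinearMap
  ∘ₗ TensorProduct.map (LinearMap.id : B →ₗ[k] B)
       (TensorProduct.assoc k H B H).toLinearMap
  ∘ₗ TensorProduct.map (LinearMap.id : B →ₗ[k] B)
       (TensorProduct.map φ (LinearMap.id : H →ₗ[k] H))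
  ∘ₗ TensorProduct.map (LinearMap.id : B →ₗ[k] B)
       (TensorProduct.assoc k B H H).symm.toLinearMap
  ∘ₗ (TensorProduct.assoc k B B (H ⊗[k] H)).toLinearMap
  ∘ₗ TensorProduct.map ΔB ΔH

/-- The smash coproduct counit on `B ⊗ H`: `ε(b ⊗ h) = εB(b) εH(h)`. -/
def smashCounit (εB : B →ₗ[k] k) (εH : H →ₗ[k] k) : B ⊗[k] H →ₗ[k] k :=
  (TensorProduct.lid k k).toLinearMap ∘ₗ TensorProduct.map εB εH

/-- The componentwise product on `B ⊗ H`: `(a ⊗ h)(b ⊗ g) = ab ⊗ hg`. -/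
def smashMul (μB : B →ₗ[k] B →ₗ[k] B) (μH : H →ₗ[k] H →ₗ[k] H) :
    B ⊗[k] H →ₗ[k] B ⊗[k] H →ₗ[k] B ⊗[k] H :=
  (TensorProduct.mk k (B ⊗[k] H) (B ⊗[k] H)).compr₂
    (TensorProduct.map (TensorProduct.lift μB) (TensorProduct.lift μH)
      ∘ₗ (TensorProduct.tensorTensorTensorComm k B H B H).toLinearMap)

/-- Threefold "componentwise comultiplication" `(C⊗C)⊗C → ((C⊗C)⊗C) ⊗ ((C⊗C)⊗C)`
obtained by applying `Δ2` to each factor and pairing the first and second legs. -/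
def convDelta3 (Δ2 : C →ₗ[k] C ⊗[k] C) :
    (C ⊗[k] C) ⊗[k] C →ₗ[k] ((C ⊗[k] C) ⊗[k] C) ⊗[k] ((C ⊗[k] C) ⊗[k] C) :=
  (TensorProduct.tensorTensorTensorComm k (C ⊗[k] C) (C ⊗[k] C) C C).toLinearMap
  ∘ₗ TensorProduct.map (TensorProduct.tensorTensorTensorComm k C C C C).toLinearMap
       (LinearMap.id : C ⊗[k] C →ₗ[k] C ⊗[k] C)
  ∘ₗ TensorProduct.map (TensorProduct.map Δ2 Δ2) Δ2

/-- The map `ξ_{X,Y}(x ⊗ y) = α_X⁻¹(x)·α_H^m(y₍₁₎) ⊗ α_Y⁻¹(y₍₀₎)` for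
Hom-Long dimodules `X`, `Y`. -/
def longXi (m : ℤ) (αH : H ≃ₗ[k] H) (αX : X ≃ₗ[k] X) (αY : Y ≃ₗ[k] Y)
    (act : X →ₗ[k] H →ₗ[k] X) (ρ : Y →ₗ[k] Y ⊗[k] H) : X ⊗[k] Y →ₗ[k] X ⊗[k] Y :=
  TensorProduct.map
      (TensorProduct.lift act ∘ₗ
        TensorProduct.map (LinearMap.id : X →ₗ[k] X) ((αH ^ m).toLinearMap))
      αY.symm.toLinearMap
    ∘ₗ (TensorProduct.assoc k X H Y).symm.toLinearMap
    ∘ₗ TensorProduct.map (LinearMap.id : X →ₗ[k] X) (TensorProduct.comm k Y H).toLinearMap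
    ∘ₗ TensorProduct.map αX.symm.toLinearMap ρ

/-- The associativity constraint `a_{X,Y,Z}((x⊗y)⊗z) = α_X^{i+1}(x) ⊗ (y ⊗ α_Z^{-j-1}(z))`. -/
def homAssoc (i j : ℤ) (αX : X ≃ₗ[k] X) (αZ : Z ≃ₗ[k] Z) :
    (X ⊗[k] Y) ⊗[k] Z ≃ₗ[k] X ⊗[k] (Y ⊗[k] Z) :=
  (TensorProduct.assoc k X Y Z).trans
    (TensorProduct.congr (αX ^ (i + 1))
      (TensorProduct.congr (LinearEquiv.refl k Y) (αZ ^ (-j - 1))))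

/-- The braiding `τ_{X,Y}(x ⊗ y) = α_Y^{j-i-1}(y₍₀₎) ⊗ α_X^{i-j-1}(x)·α_H^{-p}(y₍₁₎)`
for Yetter-Drinfeld modules. -/
def ydTau (p i j : ℤ) (αH : H ≃ₗ[k] H) (αX : X ≃ₗ[k] X) (αY : Y ≃ₗ[k] Y)
    (act : X →ₗ[k] H →ₗ[k] X) (ρ : Y →ₗ[k] Y ⊗[k] H) : X ⊗[k] Y →ₗ[k] Y ⊗[k] X :=
  TensorProduct.map ((αY ^ (j - i - 1)).toLinearMap)
      (TensorProduct.lift act ∘ₗ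
        TensorProduct.map ((αX ^ (i - j - 1)).toLinearMap) ((αH ^ (-p)).toLinearMap))
    ∘ₗ (TensorProduct.leftComm k X Y H).toLinearMap
    ∘ₗ TensorProduct.map (LinearMap.id : X →ₗ[k] X) ρ

end HomDefs

/-!
Let `p = leftSlice εB : B ⊗ H → H` and `q = rightSlice εH : B ⊗ H → B` be the projections given by
the counits, and let `α = αB ⊗ αH`. The identity `(p ⊗ q) ∘ Δ = φ ∘ α` recovers `φ` from the smash
comultiplication `Δ`, since `α` is bijective. Hence whatever `Δ` satisfies can be read off for `φ`:
applying `p ⊗ (q ⊗ q)` and `(p ⊗ p) ⊗ q` to coassociativity gives (M1) and (M2), applying `q` and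
`p` to the counit laws gives (M3) and (M4), and since `p`, `q`, `α` are multiplicative and unital
so is `φ` as soon as `Δ` is. Conversely (M1) and (M2) turn the two sides of coassociativity into
composites of the same three crossings, of which the last two act on disjoint tensor factors and
therefore commute.
-/

section HomCoassoc

variable {R C : Type*} [CommSemiring R] [AddCommMonoid C] [Module R C]

/-- The Hom-coassociativity law of a Hom-coalgebra, `α(c₁) ⊗ Δ(c₂) = Δ(c₁) ⊗ α(c₂)`, as an equation
of linear maps and for a possibly non-bijective twisting map `α`. -/
def IsHomCoassoc (α : C →ₗ[R] C) (Δ : C →ₗ[R] C ⊗[R] C) : Prop :=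
  map α Δ ∘ₗ Δ = (TensorProduct.assoc R C C C).toLinearMap ∘ₗ map Δ α ∘ₗ Δ

end HomCoassoc

section Slice

variable {R M N P X : Type*} [CommSemiring R]
variable [AddCommMonoid M] [Module R M] [AddCommMonoid N] [Module R N]
variable [AddCommMonoid P] [Module R P] [AddCommMonoid X] [Module R X]

/-- The slice map `m ⊗ n ↦ f m • n`, which evaluates the left tensor factor at a functional. For a
counit `f` this is the projection of a tensor product of coalgebras onto its right factor. -/
def leftSlice (f : M →ₗ[R] R) : M ⊗[R] N →ₗ[R] N :=
  (TensorProduct.lid R N).toLinearMap ∘ₗ map f LinearMap.id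

/-- The slice map `m ⊗ n ↦ f n • m`, which evaluates the right tensor factor at a functional. For a
counit `f` this is the projection of a tensor product of coalgebras onto its left factor. -/
def rightSlice (f : N →ₗ[R] R) : M ⊗[R] N →ₗ[R] M :=
  (TensorProduct.rid R M).toLinearMap ∘ₗ map LinearMap.id f

@[simp]
lemma leftSlice_tmul (f : M →ₗ[R] R) (m : M) (n : N) : leftSlice f (m ⊗ₜ[R] n) = f m • n := by
  simp [leftSlice]

@[simp]
lemma rightSlice_tmul (f : N →ₗ[R] R) (m : M) (n : N) : rightSlice f (m ⊗ₜ[R] n) = f n • m := by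
  simp [rightSlice]

lemma leftSlice_map (f : P →ₗ[R] R) (g : M →ₗ[R] P) (h : N →ₗ[R] X) (z : M ⊗[R] N) :
    leftSlice f (map g h z) = h (leftSlice (f ∘ₗ g) z) :=
  LinearMap.congr_fun (f := leftSlice f ∘ₗ map g h) (g := h ∘ₗ leftSlice (f ∘ₗ g))
    (TensorProduct.ext' fun m n => by simp) z

lemma rightSlice_map (f : P →ₗ[R] R) (g : M →ₗ[R] X) (h : N →ₗ[R] P) (z : M ⊗[R] N) :
    rightSlice f (map g h z) = g (rightSlice (f ∘ₗ h) z) :=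
  LinearMap.congr_fun (f := rightSlice f ∘ₗ map g h) (g := g ∘ₗ rightSlice (f ∘ₗ h))
    (TensorProduct.ext' fun m n => by simp) z

lemma leftSlice_assoc (f : M →ₗ[R] R) (z : (M ⊗[R] N) ⊗[R] P) :
    leftSlice f (TensorProduct.assoc R M N P z) = map (leftSlice f) LinearMap.id z :=
  LinearMap.congr_fun (f := leftSlice f ∘ₗ (TensorProduct.assoc R M N P).toLinearMap)
    (TensorProduct.ext_threefold fun m n p => by simp [smul_tmul']) z

lemma rightSlice_assoc_symm (f : P →ₗ[R] R) (z : M ⊗[R] (N ⊗[R] P)) :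
    rightSlice f ((TensorProduct.assoc R M N P).symm z) = map LinearMap.id (rightSlice f) z := by
  refine LinearMap.congr_fun (f := rightSlice f ∘ₗ (TensorProduct.assoc R M N P).symm.toLinearMap)
    ?_ z
  ext m n p
  simp

lemma map_rightSlice_id_assoc_symm (f : N →ₗ[R] R) (z : M ⊗[R] (N ⊗[R] P)) :
    map (rightSlice f) LinearMap.id ((TensorProduct.assoc R M N P).symm z) =
      map LinearMap.id (leftSlice f) z := by
  refine LinearMap.congr_fun
    (f := map (rightSlice f) LinearMap.id ∘ₗ (TensorProduct.assoc R M N P).symm.toLinearMap) ?_ z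
  ext m n p
  simp [smul_tmul]

lemma map_id_leftSlice_assoc (f : N →ₗ[R] R) (z : (M ⊗[R] N) ⊗[R] P) :
    map LinearMap.id (leftSlice f) (TensorProduct.assoc R M N P z) =
      map (rightSlice f) LinearMap.id z := by
  rw [← map_rightSlice_id_assoc_symm, LinearEquiv.symm_apply_apply]

end Slice

section MiddleMap

variable {R M N P Q U V W X Y Z : Type*} [CommSemiring R]
variable [AddCommMonoid M] [Module R M] [AddCommMonoid N] [Module R N]
variable [AddCommMonoid P] [Module R P] [AddCommMonoid Q] [Module R Q]
variable [AddCommMonoid U] [Module R U] [AddCommMonoid V] [Module R V]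
variable [AddCommMonoid W] [Module R W] [AddCommMonoid X] [Module R X]
variable [AddCommMonoid Y] [Module R Y] [AddCommMonoid Z] [Module R Z]

/-- The map `(x ⊗ m) ⊗ (n ⊗ y) ↦ (x ⊗ p) ⊗ (q ⊗ y)` with `p ⊗ q = ψ (m ⊗ n)`, that is `ψ` applied to
the two middle factors. Its bracketing is that of `smashComul`, which is
`middleMap φ ∘ₗ map ΔB ΔH` by definition. -/
def middleMap (ψ : M ⊗[R] N →ₗ[R] P ⊗[R] Q) :
    (X ⊗[R] M) ⊗[R] (N ⊗[R] Y) →ₗ[R] (X ⊗[R] P) ⊗[R] (Q ⊗[R] Y) :=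
  (TensorProduct.assoc R X P (Q ⊗[R] Y)).symm.toLinearMap
  ∘ₗ map LinearMap.id (TensorProduct.assoc R P Q Y).toLinearMap
  ∘ₗ map LinearMap.id (map ψ LinearMap.id)
  ∘ₗ map LinearMap.id (TensorProduct.assoc R M N Y).symm.toLinearMap
  ∘ₗ (TensorProduct.assoc R X M (N ⊗[R] Y)).toLinearMap

lemma middleMap_tmul (ψ : M ⊗[R] N →ₗ[R] P ⊗[R] Q) (x : X) (m : M) (n : N) (y : Y) :
    middleMap ψ ((x ⊗ₜ[R] m) ⊗ₜ[R] (n ⊗ₜ[R] y)) =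
      map (TensorProduct.mk R X P x) ((TensorProduct.mk R Q Y).flip y) (ψ (m ⊗ₜ[R] n)) := by
  simp only [middleMap, LinearMap.comp_apply, LinearEquiv.coe_coe, assoc_tmul, map_tmul,
    LinearMap.id_apply, assoc_symm_tmul]
  induction ψ (m ⊗ₜ[R] n) using TensorProduct.induction_on with
  | zero => simp
  | tmul p q => simp
  | add u v hu hv => simp only [add_tmul, tmul_add, map_add, hu, hv]

lemma map_map_middleMap {ψ : M ⊗[R] N →ₗ[R] P ⊗[R] Q} {χ : U ⊗[R] V →ₗ[R] W ⊗[R] Z}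
    {m : M →ₗ[R] U} {n : N →ₗ[R] V} {p : P →ₗ[R] W} {q : Q →ₗ[R] Z}
    (h : map p q ∘ₗ ψ = χ ∘ₗ map m n) {X' Y' : Type*} [AddCommMonoid X'] [Module R X']
    [AddCommMonoid Y'] [Module R Y'] (f : X →ₗ[R] X') (g : Y →ₗ[R] Y')
    (z : (X ⊗[R] M) ⊗[R] (N ⊗[R] Y)) :
    map (map f p) (map q g) (middleMap ψ z) = middleMap χ (map (map f m) (map n g) z) := by
  refine LinearMap.congr_fun (f := map (map f p) (map q g) ∘ₗ middleMap ψ)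
    (g := middleMap χ ∘ₗ map (map f m) (map n g)) (ext_fourfold' fun x a b y => ?_) z
  have hab : χ (m a ⊗ₜ[R] n b) = map p q (ψ (a ⊗ₜ[R] b)) :=
    (LinearMap.congr_fun h (a ⊗ₜ[R] b)).symm
  simp only [LinearMap.comp_apply, map_tmul, middleMap_tmul, hab, map_map]
  rfl

lemma map_id_rightSlice_middleMap (ψ : M ⊗[R] N →ₗ[R] P ⊗[R] Q) (g : Y →ₗ[R] R)
    (z : (X ⊗[R] M) ⊗[R] (N ⊗[R] Y)) :
    map LinearMap.id (rightSlice g) (middleMap ψ z) =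
      (TensorProduct.assoc R X P Q).symm (map LinearMap.id ψ
        (TensorProduct.assoc R X M N (map LinearMap.id (rightSlice g) z))) := by
  refine LinearMap.congr_fun (f := map LinearMap.id (rightSlice g) ∘ₗ middleMap ψ)
    (g := (TensorProduct.assoc R X P Q).symm.toLinearMap ∘ₗ map LinearMap.id ψ ∘ₗ
      (TensorProduct.assoc R X M N).toLinearMap ∘ₗ map LinearMap.id (rightSlice g))
    (ext_fourfold' fun x m n y => ?_) z
  simp only [LinearMap.comp_apply, LinearEquiv.coe_coe, middleMap_tmul, map_tmul,
    LinearMap.id_apply, rightSlice_tmul, tmul_smul, assoc_tmul, map_smul]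
  induction ψ (m ⊗ₜ[R] n) using TensorProduct.induction_on with
  | zero => simp
  | tmul p q => simp
  | add u v hu hv => simp only [tmul_add, map_add, smul_add, hu, hv]

lemma map_leftSlice_id_middleMap (ψ : M ⊗[R] N →ₗ[R] P ⊗[R] Q) (f : X →ₗ[R] R)
    (z : (X ⊗[R] M) ⊗[R] (N ⊗[R] Y)) :
    map (leftSlice f) LinearMap.id (middleMap ψ z) =
      TensorProduct.assoc R P Q Y (map ψ LinearMap.id
        ((TensorProduct.assoc R M N Y).symm (map (leftSlice f) LinearMap.id z))) := by
  refine LinearMap.congr_fun (f := map (leftSlice f) LinearMap.id ∘ₗ middleMap ψ)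
    (g := (TensorProduct.assoc R P Q Y).toLinearMap ∘ₗ map ψ LinearMap.id ∘ₗ
      (TensorProduct.assoc R M N Y).symm.toLinearMap ∘ₗ map (leftSlice f) LinearMap.id)
    (ext_fourfold' fun x m n y => ?_) z
  simp only [LinearMap.comp_apply, LinearEquiv.coe_coe, middleMap_tmul, map_tmul,
    LinearMap.id_apply, leftSlice_tmul, ← smul_tmul', assoc_symm_tmul, map_smul]
  induction ψ (m ⊗ₜ[R] n) using TensorProduct.induction_on with
  | zero => simp
  | tmul p q => simp [smul_tmul']
  | add u v hu hv => simp only [add_tmul, map_add, smul_add, hu, hv]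

lemma map_leftSlice_rightSlice_middleMap (ψ : M ⊗[R] N →ₗ[R] P ⊗[R] Q) (f : X →ₗ[R] R)
    (g : Y →ₗ[R] R) (z : (X ⊗[R] M) ⊗[R] (N ⊗[R] Y)) :
    map (leftSlice f) (rightSlice g) (middleMap ψ z) =
      ψ (map (leftSlice f) (rightSlice g) z) := by
  calc map (leftSlice f) (rightSlice g) (middleMap ψ z)
      = map (leftSlice f) LinearMap.id (map LinearMap.id (rightSlice g) (middleMap ψ z)) := by
        rw [map_map, LinearMap.comp_id, LinearMap.id_comp]
    _ = ψ (map (leftSlice f) LinearMap.id (map LinearMap.id (rightSlice g) z)) := by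
        rw [map_id_rightSlice_middleMap, ← leftSlice_assoc, LinearEquiv.apply_symm_apply,
          leftSlice_map, LinearMap.comp_id, leftSlice_assoc]
    _ = ψ (map (leftSlice f) (rightSlice g) z) := by
        rw [map_map, LinearMap.comp_id, LinearMap.id_comp]

section Counit

variable {φ : M ⊗[R] N →ₗ[R] N ⊗[R] M} {f : M →ₗ[R] R} {g : N →ₗ[R] R}

lemma leftSlice_comp_leftSlice_middleMap (hφ : leftSlice g ∘ₗ φ = rightSlice g)
    (h : X →ₗ[R] R) (z : (X ⊗[R] M) ⊗[R] (N ⊗[R] Y)) :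
    leftSlice (g ∘ₗ leftSlice h) (middleMap φ z) = map (leftSlice h) (leftSlice g) z := by
  calc leftSlice (g ∘ₗ leftSlice h) (middleMap φ z)
      = leftSlice g (map (leftSlice h) LinearMap.id (middleMap φ z)) := by
        rw [leftSlice_map, LinearMap.id_apply]
    _ = map (leftSlice g ∘ₗ φ) LinearMap.id
          ((TensorProduct.assoc R M N Y).symm (map (leftSlice h) LinearMap.id z)) := by
        rw [map_leftSlice_id_middleMap, leftSlice_assoc, map_map, LinearMap.comp_id]
    _ = map (leftSlice h) (leftSlice g) z := by
        rw [hφ, map_rightSlice_id_assoc_symm, map_map, LinearMap.comp_id, LinearMap.id_comp]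

lemma rightSlice_comp_rightSlice_middleMap (hφ : rightSlice f ∘ₗ φ = leftSlice f)
    (h : Y →ₗ[R] R) (z : (X ⊗[R] M) ⊗[R] (N ⊗[R] Y)) :
    rightSlice (f ∘ₗ rightSlice h) (middleMap φ z) = map (rightSlice f) (rightSlice h) z := by
  calc rightSlice (f ∘ₗ rightSlice h) (middleMap φ z)
      = rightSlice f (map LinearMap.id (rightSlice h) (middleMap φ z)) := by
        rw [rightSlice_map, LinearMap.id_apply]
    _ = map LinearMap.id (rightSlice f ∘ₗ φ)
          (TensorProduct.assoc R X M N (map LinearMap.id (rightSlice h) z)) := by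
        rw [map_id_rightSlice_middleMap, rightSlice_assoc_symm, map_map, LinearMap.comp_id]
    _ = map (rightSlice f) (rightSlice h) z := by
        rw [hφ, map_id_leftSlice_assoc, map_map, LinearMap.comp_id, LinearMap.id_comp]

lemma map_rightSlice_rightSlice_middleMap (hφ : leftSlice g ∘ₗ φ = rightSlice g)
    (h : Y →ₗ[R] R) (z : (X ⊗[R] M) ⊗[R] (N ⊗[R] Y)) :
    map (rightSlice g) (rightSlice h) (middleMap φ z) = rightSlice (g ∘ₗ rightSlice h) z := by
  calc map (rightSlice g) (rightSlice h) (middleMap φ z)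
      = map (rightSlice g) LinearMap.id (map LinearMap.id (rightSlice h) (middleMap φ z)) := by
        rw [map_map, LinearMap.comp_id, LinearMap.id_comp]
    _ = map LinearMap.id (leftSlice g ∘ₗ φ)
          (TensorProduct.assoc R X M N (map LinearMap.id (rightSlice h) z)) := by
        rw [map_id_rightSlice_middleMap, map_rightSlice_id_assoc_symm, map_map, LinearMap.comp_id]
    _ = rightSlice (g ∘ₗ rightSlice h) z := by
        rw [hφ, ← rightSlice_assoc_symm, LinearEquiv.symm_apply_apply, rightSlice_map,
          LinearMap.id_apply]

lemma map_leftSlice_leftSlice_middleMap (hφ : rightSlice f ∘ₗ φ = leftSlice f)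
    (h : X →ₗ[R] R) (z : (X ⊗[R] M) ⊗[R] (N ⊗[R] Y)) :
    map (leftSlice h) (leftSlice f) (middleMap φ z) = leftSlice (f ∘ₗ leftSlice h) z := by
  calc map (leftSlice h) (leftSlice f) (middleMap φ z)
      = map LinearMap.id (leftSlice f) (map (leftSlice h) LinearMap.id (middleMap φ z)) := by
        rw [map_map, LinearMap.comp_id, LinearMap.id_comp]
    _ = map (rightSlice f ∘ₗ φ) LinearMap.id
          ((TensorProduct.assoc R M N Y).symm (map (leftSlice h) LinearMap.id z)) := by
        rw [map_leftSlice_id_middleMap, map_id_leftSlice_assoc, map_map, LinearMap.comp_id]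
    _ = leftSlice (f ∘ₗ leftSlice h) z := by
        rw [hφ, ← leftSlice_assoc, LinearEquiv.apply_symm_apply, leftSlice_map,
          LinearMap.id_apply]

end Counit

/-- The crossing of a pair in `M` past `N` built from a crossing `φ` of one `M` past `N`; it is the
right-hand side of (M1) before the comultiplication is inserted. -/
def crossLeftPair (φ : M ⊗[R] N →ₗ[R] N ⊗[R] M) :
    (M ⊗[R] M) ⊗[R] N →ₗ[R] N ⊗[R] (M ⊗[R] M) :=
  (TensorProduct.assoc R N M M).toLinearMap
  ∘ₗ map φ LinearMap.id
  ∘ₗ (TensorProduct.assoc R M N M).symm.toLinearMap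
  ∘ₗ map LinearMap.id φ
  ∘ₗ (TensorProduct.assoc R M M N).toLinearMap

/-- The crossing of `M` past a pair in `N` built from a crossing `φ` of `M` past one `N`; it is the
right-hand side of (M2) before the comultiplication is inserted. -/
def crossRightPair (φ : M ⊗[R] N →ₗ[R] N ⊗[R] M) :
    M ⊗[R] (N ⊗[R] N) →ₗ[R] (N ⊗[R] N) ⊗[R] M :=
  (TensorProduct.assoc R N N M).symm.toLinearMap
  ∘ₗ map LinearMap.id φ
  ∘ₗ (TensorProduct.assoc R N M N).toLinearMap
  ∘ₗ map φ LinearMap.id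
  ∘ₗ (TensorProduct.assoc R M N N).symm.toLinearMap

/-- The map `(u ⊗ v) ⊗ (p ⊗ q) ↦ (x ⊗ u) ⊗ ((v ⊗ p) ⊗ (q ⊗ y))`, the common shape of both sides of
coassociativity of a smash coproduct on pure tensors. -/
def flank (x : X) (y : Y) :
    (U ⊗[R] V) ⊗[R] (P ⊗[R] Q) →ₗ[R] (X ⊗[R] U) ⊗[R] ((V ⊗[R] P) ⊗[R] (Q ⊗[R] Y)) :=
  map (TensorProduct.mk R X U x)
    (map LinearMap.id ((TensorProduct.mk R Q Y).flip y) ∘ₗ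
      (TensorProduct.assoc R V P Q).symm.toLinearMap)
  ∘ₗ (TensorProduct.assoc R U V (P ⊗[R] Q)).toLinearMap

lemma flank_tmul (x : X) (y : Y) (u : U) (v : V) (p : P) (q : Q) :
    flank x y ((u ⊗ₜ[R] v) ⊗ₜ[R] (p ⊗ₜ[R] q)) =
      (x ⊗ₜ[R] u) ⊗ₜ[R] ((v ⊗ₜ[R] p) ⊗ₜ[R] (q ⊗ₜ[R] y)) := by
  simp [flank]

lemma map_id_middleMap_assoc_tmul (ψ : M ⊗[R] N →ₗ[R] P ⊗[R] Q) (x : X) (y : Y) (m : M) (n : N)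
    (w : U ⊗[R] V) :
    map LinearMap.id (middleMap ψ) (map (TensorProduct.mk R X U x)
      ((TensorProduct.mk R _ _).flip (n ⊗ₜ[R] y)) (TensorProduct.assoc R U V M (w ⊗ₜ[R] m))) =
      flank x y (w ⊗ₜ[R] ψ (m ⊗ₜ[R] n)) := by
  induction w using TensorProduct.induction_on with
  | zero => simp
  | add w w' hw hw' => simp only [add_tmul, map_add, hw, hw']
  | tmul u v =>
    simp only [assoc_tmul, map_tmul, LinearMap.id_apply, LinearMap.flip_apply, mk_apply,
      middleMap_tmul]
    induction ψ (m ⊗ₜ[R] n) using TensorProduct.induction_on with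
    | zero => simp
    | add w w' hw hw' => simp only [tmul_add, map_add, hw, hw']
    | tmul p q => simp [flank_tmul]

lemma assoc_map_middleMap_id_tmul (ψ : M ⊗[R] N →ₗ[R] P ⊗[R] Q) (x : X) (y : Y) (m : M) (n : N)
    (w : U ⊗[R] V) :
    TensorProduct.assoc R _ _ _ (map (middleMap ψ) LinearMap.id
      (map (TensorProduct.mk R _ _ (x ⊗ₜ[R] m)) ((TensorProduct.mk R V Y).flip y)
        ((TensorProduct.assoc R N U V).symm (n ⊗ₜ[R] w)))) =
      flank x y (ψ (m ⊗ₜ[R] n) ⊗ₜ[R] w) := by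
  induction w using TensorProduct.induction_on with
  | zero => simp
  | add w w' hw hw' => simp only [tmul_add, map_add, hw, hw']
  | tmul u v =>
    simp only [assoc_symm_tmul, map_tmul, LinearMap.id_apply, LinearMap.flip_apply, mk_apply,
      middleMap_tmul]
    induction ψ (m ⊗ₜ[R] n) using TensorProduct.induction_on with
    | zero => simp
    | add w w' hw hw' => simp only [add_tmul, map_add, hw, hw']
    | tmul p q => simp [flank_tmul]

lemma map_id_middleMap_middleMap_crossLeftPair (φ : M ⊗[R] N →ₗ[R] N ⊗[R] M)
    (z : ((M ⊗[R] M) ⊗[R] M) ⊗[R] ((N ⊗[R] N) ⊗[R] N)) :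
    map LinearMap.id (middleMap φ) (middleMap (crossLeftPair φ)
      (map (TensorProduct.assoc R M M M).toLinearMap (TensorProduct.assoc R N N N).toLinearMap z)) =
      TensorProduct.assoc R _ _ _
        (map (middleMap φ) LinearMap.id (middleMap (crossRightPair φ) z)) := by
  refine LinearMap.congr_fun
    (f := map LinearMap.id (middleMap φ) ∘ₗ middleMap (crossLeftPair φ) ∘ₗ
      map (TensorProduct.assoc R M M M).toLinearMap (TensorProduct.assoc R N N N).toLinearMap)
    (g := (TensorProduct.assoc R _ _ _).toLinearMap ∘ₗ
      map (middleMap φ) LinearMap.id ∘ₗ middleMap (crossRightPair φ)) ?_ z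
  ext m₁ m₂ m₃ n₁ n₂ n₃
  simp only [AlgebraTensorModule.curry_apply, curry_apply, LinearMap.coe_restrictScalars,
    LinearMap.comp_apply, LinearEquiv.coe_coe, map_tmul, assoc_tmul, middleMap_tmul,
    crossLeftPair, crossRightPair, assoc_symm_tmul, LinearMap.id_apply]
  -- Crossing `m₃` past `n₁` leaves two crossings on disjoint factors, which the two sides
  -- perform in opposite orders.
  induction φ (m₃ ⊗ₜ[R] n₁) using TensorProduct.induction_on with
  | zero => simp
  | add w w' hw hw' => simp only [add_tmul, tmul_add, map_add, hw, hw']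
  | tmul n m =>
    simp only [assoc_symm_tmul, assoc_tmul, map_tmul, LinearMap.id_apply,
      map_id_middleMap_assoc_tmul, assoc_map_middleMap_id_tmul]

lemma map_crossLeftPair {φ : M ⊗[R] N →ₗ[R] N ⊗[R] M} {χ : U ⊗[R] V →ₗ[R] V ⊗[R] U}
    {m : M →ₗ[R] U} {n : N →ₗ[R] V} (h : map n m ∘ₗ φ = χ ∘ₗ map m n)
    (z : (M ⊗[R] M) ⊗[R] N) :
    map n (map m m) (crossLeftPair φ z) = crossLeftPair χ (map (map m m) n z) := by
  have hleft (x : (M ⊗[R] N) ⊗[R] M) :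
      map (map n m) m (map φ LinearMap.id x) = map χ LinearMap.id (map (map m n) m x) := by
    simp only [map_map, h, LinearMap.comp_id, LinearMap.id_comp]
  have hright (x : M ⊗[R] (M ⊗[R] N)) :
      map m (map n m) (map LinearMap.id φ x) = map LinearMap.id χ (map m (map m n) x) := by
    simp only [map_map, h, LinearMap.comp_id, LinearMap.id_comp]
  simp only [crossLeftPair, LinearMap.comp_apply, LinearEquiv.coe_coe]
  rw [map_map_assoc, hleft, map_map_assoc_symm, hright, map_map_assoc]

lemma map_crossRightPair {φ : M ⊗[R] N →ₗ[R] N ⊗[R] M} {χ : U ⊗[R] V →ₗ[R] V ⊗[R] U}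
    {m : M →ₗ[R] U} {n : N →ₗ[R] V} (h : map n m ∘ₗ φ = χ ∘ₗ map m n)
    (z : M ⊗[R] (N ⊗[R] N)) :
    map (map n n) m (crossRightPair φ z) = crossRightPair χ (map m (map n n) z) := by
  have hleft (x : (M ⊗[R] N) ⊗[R] N) :
      map (map n m) n (map φ LinearMap.id x) = map χ LinearMap.id (map (map m n) n x) := by
    simp only [map_map, h, LinearMap.comp_id, LinearMap.id_comp]
  have hright (x : N ⊗[R] (M ⊗[R] N)) :
      map n (map n m) (map LinearMap.id φ x) = map LinearMap.id χ (map n (map m n) x) := by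
    simp only [map_map, h, LinearMap.comp_id, LinearMap.id_comp]
  simp only [crossRightPair, LinearMap.comp_apply, LinearEquiv.coe_coe]
  rw [map_map_assoc_symm, hright, map_map_assoc, hleft, map_map_assoc_symm]

lemma IsHomCoassoc.middleMap_comp_map {α : M →ₗ[R] M} {Δ : M →ₗ[R] M ⊗[R] M} {β : N →ₗ[R] N}
    {Γ : N →ₗ[R] N ⊗[R] N} {φ : M ⊗[R] N →ₗ[R] N ⊗[R] M} (hΔ : IsHomCoassoc α Δ)
    (hΓ : IsHomCoassoc β Γ) (hleft : map β Δ ∘ₗ φ = crossLeftPair φ ∘ₗ map Δ β)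
    (hright : map Γ α ∘ₗ φ = crossRightPair φ ∘ₗ map α Γ) :
    IsHomCoassoc (map α β) (middleMap φ ∘ₗ map Δ Γ) := by
  rw [IsHomCoassoc] at hΔ hΓ
  refine LinearMap.ext fun z => ?_
  set w := map Δ Γ z with hw
  have hcoassoc : map (map α Δ) (map β Γ) w =
      map (TensorProduct.assoc R M M M).toLinearMap (TensorProduct.assoc R N N N).toLinearMap
        (map (map Δ α) (map Γ β) w) := by
    simp only [hw, map_map, hΔ, hΓ]
  calc map (map α β) (middleMap φ ∘ₗ map Δ Γ) (middleMap φ w)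
      = map LinearMap.id (middleMap φ) (map (map α β) (map Δ Γ) (middleMap φ w)) := by
        rw [map_map, LinearMap.id_comp]
    _ = map LinearMap.id (middleMap φ)
          (middleMap (crossLeftPair φ) (map (map α Δ) (map β Γ) w)) := by
        rw [map_map_middleMap hleft]
    _ = TensorProduct.assoc R _ _ _ (map (middleMap φ) LinearMap.id
          (middleMap (crossRightPair φ) (map (map Δ α) (map Γ β) w))) := by
        rw [hcoassoc, map_id_middleMap_middleMap_crossLeftPair]
    _ = TensorProduct.assoc R _ _ _ (map (middleMap φ) LinearMap.id
          (map (map Δ Γ) (map α β) (middleMap φ w))) := by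
        rw [map_map_middleMap hright]
    _ = TensorProduct.assoc R _ _ _ (map (middleMap φ ∘ₗ map Δ Γ) (map α β) (middleMap φ w)) := by
        rw [map_map, LinearMap.id_comp]

end MiddleMap

section SmashCoalgebra

variable {k}
variable {C B H : Type*} [AddCommGroup C] [Module k C]
variable [AddCommGroup B] [Module k B] [AddCommGroup H] [Module k H]

namespace IsHomCoalgebra

variable {α : C ≃ₗ[k] C} {Δ : C →ₗ[k] C ⊗[k] C} {ε : C →ₗ[k] k}

lemma comul_comp (h : IsHomCoalgebra k α Δ ε) :
    Δ ∘ₗ α.toLinearMap = map α.toLinearMap α.toLinearMap ∘ₗ Δ :=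
  LinearMap.ext h.1

lemma counit_comp (h : IsHomCoalgebra k α Δ ε) : ε ∘ₗ α.toLinearMap = ε :=
  LinearMap.ext h.2.1

lemma isHomCoassoc (h : IsHomCoalgebra k α Δ ε) : IsHomCoassoc α.toLinearMap Δ :=
  LinearMap.ext h.2.2.1

lemma leftSlice_comp_comul (h : IsHomCoalgebra k α Δ ε) : leftSlice ε ∘ₗ Δ = α.toLinearMap :=
  LinearMap.ext h.2.2.2.1

lemma rightSlice_comp_comul (h : IsHomCoalgebra k α Δ ε) : rightSlice ε ∘ₗ Δ = α.toLinearMap :=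
  LinearMap.ext h.2.2.2.2

end IsHomCoalgebra

variable {αB : B ≃ₗ[k] B} {ΔB : B →ₗ[k] B ⊗[k] B} {εB : B →ₗ[k] k}
variable {αH : H ≃ₗ[k] H} {ΔH : H →ₗ[k] H ⊗[k] H} {εH : H →ₗ[k] k}
variable {φ : B ⊗[k] H →ₗ[k] H ⊗[k] B}

lemma smashComul_eq_middleMap_comp : smashComul k φ ΔB ΔH = middleMap φ ∘ₗ map ΔB ΔH :=
  rfl

lemma smashCounit_eq_comp_leftSlice : smashCounit k εB εH = εH ∘ₗ leftSlice εB :=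
  TensorProduct.ext' fun b h => by simp [smashCounit]

lemma smashCounit_eq_comp_rightSlice : smashCounit k εB εH = εB ∘ₗ rightSlice εH :=
  TensorProduct.ext' fun b h => by simp [smashCounit, mul_comm]

theorem IsHomCotwistor.isHomCoalgebra_smashComul (hB : IsHomCoalgebra k αB ΔB εB)
    (hH : IsHomCoalgebra k αH ΔH εH) (hφ : IsHomCotwistor k αB ΔB εB αH ΔH εH φ) :
    IsHomCoalgebra k (TensorProduct.congr αB αH) (smashComul k φ ΔB ΔH)
      (smashCounit k εB εH) := by
  obtain ⟨hnat, hM1, hM2, hM3, hM4⟩ := hφ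
  refine ⟨fun z => ?_, fun z => ?_, fun z => ?_, fun z => ?_, fun z => ?_⟩
  · calc middleMap φ (map ΔB ΔH (map αB.toLinearMap αH.toLinearMap z))
        = middleMap φ (map (map αB.toLinearMap αB.toLinearMap)
            (map αH.toLinearMap αH.toLinearMap) (map ΔB ΔH z)) := by
          simp only [map_map, hB.comul_comp, hH.comul_comp]
      _ = _ := (map_map_middleMap hnat.symm _ _ _).symm
  · change smashCounit k εB εH (map αB.toLinearMap αH.toLinearMap z) = _
    rw [smashCounit, LinearMap.comp_apply, map_map, hB.counit_comp, hH.counit_comp]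
    rfl
  · exact LinearMap.congr_fun (hB.isHomCoassoc.middleMap_comp_map hH.isHomCoassoc hM1 hM2) z
  · calc leftSlice (smashCounit k εB εH) (middleMap φ (map ΔB ΔH z))
        = map (leftSlice εB) (leftSlice εH) (map ΔB ΔH z) := by
          rw [smashCounit_eq_comp_leftSlice, leftSlice_comp_leftSlice_middleMap hM3]
      _ = map αB.toLinearMap αH.toLinearMap z := by
          rw [map_map, hB.leftSlice_comp_comul, hH.leftSlice_comp_comul]
  · calc rightSlice (smashCounit k εB εH) (middleMap φ (map ΔB ΔH z))
        = map (rightSlice εB) (rightSlice εH) (map ΔB ΔH z) := by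
          rw [smashCounit_eq_comp_rightSlice, rightSlice_comp_rightSlice_middleMap hM4]
      _ = map αB.toLinearMap αH.toLinearMap z := by
          rw [map_map, hB.rightSlice_comp_comul, hH.rightSlice_comp_comul]

lemma IsHomCoalgebra.leftSlice_comp_map (hB : IsHomCoalgebra k αB ΔB εB) (f : H →ₗ[k] H) :
    leftSlice εB ∘ₗ map αB.toLinearMap f = f ∘ₗ leftSlice εB :=
  LinearMap.ext fun z => by
    rw [LinearMap.comp_apply, leftSlice_map, hB.counit_comp, LinearMap.comp_apply]

lemma IsHomCoalgebra.rightSlice_comp_map (hH : IsHomCoalgebra k αH ΔH εH) (f : B →ₗ[k] B) :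
    rightSlice εH ∘ₗ map f αH.toLinearMap = f ∘ₗ rightSlice εH :=
  LinearMap.ext fun z => by
    rw [LinearMap.comp_apply, rightSlice_map, hH.counit_comp, LinearMap.comp_apply]

lemma map_leftSlice_rightSlice_comp_smashComul (hB : leftSlice εB ∘ₗ ΔB = αB.toLinearMap)
    (hH : rightSlice εH ∘ₗ ΔH = αH.toLinearMap) :
    map (leftSlice εB) (rightSlice εH) ∘ₗ smashComul k φ ΔB ΔH =
      φ ∘ₗ map αB.toLinearMap αH.toLinearMap := by
  refine LinearMap.ext fun z => ?_
  rw [smashComul_eq_middleMap_comp, LinearMap.comp_apply, LinearMap.comp_apply,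
    map_leftSlice_rightSlice_middleMap, map_map, hB, hH, LinearMap.comp_apply]

lemma IsHomCoalgebra.comp_map_eq_map_comp_of_smashComul (hB : IsHomCoalgebra k αB ΔB εB)
    (hH : IsHomCoalgebra k αH ΔH εH)
    (hΔ : IsHomCoalgebra k (TensorProduct.congr αB αH) (smashComul k φ ΔB ΔH)
      (smashCounit k εB εH)) :
    φ ∘ₗ map αB.toLinearMap αH.toLinearMap = map αH.toLinearMap αB.toLinearMap ∘ₗ φ := by
  have hφ := map_leftSlice_rightSlice_comp_smashComul (φ := φ) hB.leftSlice_comp_comul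
    hH.rightSlice_comp_comul
  have hα := map_surjective αB.surjective αH.surjective
  have hcomul : smashComul k φ ΔB ΔH ∘ₗ map αB.toLinearMap αH.toLinearMap = _ := hΔ.comul_comp
  refine (LinearMap.cancel_right hα).1 ?_
  calc (φ ∘ₗ map αB.toLinearMap αH.toLinearMap) ∘ₗ map αB.toLinearMap αH.toLinearMap
      = map (leftSlice εB) (rightSlice εH) ∘ₗ
          map (map αB.toLinearMap αH.toLinearMap) (map αB.toLinearMap αH.toLinearMap) ∘ₗ
          smashComul k φ ΔB ΔH := by
        rw [← hφ, LinearMap.comp_assoc, hcomul]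
        rfl
    _ = map αH.toLinearMap αB.toLinearMap ∘ₗ map (leftSlice εB) (rightSlice εH) ∘ₗ
          smashComul k φ ΔB ΔH := by
        rw [← LinearMap.comp_assoc, ← map_comp, hB.leftSlice_comp_map, hH.rightSlice_comp_map,
          map_comp, LinearMap.comp_assoc]
    _ = (map αH.toLinearMap αB.toLinearMap ∘ₗ φ) ∘ₗ map αB.toLinearMap αH.toLinearMap := by
        rw [hφ, LinearMap.comp_assoc]

lemma IsHomCoalgebra.leftSlice_comp_of_smashComul (hB : IsHomCoalgebra k αB ΔB εB)
    (hH : IsHomCoalgebra k αH ΔH εH)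
    (hΔ : leftSlice (smashCounit k εB εH) ∘ₗ smashComul k φ ΔB ΔH =
      map αB.toLinearMap αH.toLinearMap) :
    leftSlice εH ∘ₗ φ = rightSlice εH := by
  have hα := map_surjective αB.surjective αH.surjective
  refine (LinearMap.cancel_right hα).1 ?_
  rw [LinearMap.comp_assoc, ← map_leftSlice_rightSlice_comp_smashComul hB.leftSlice_comp_comul
    hH.rightSlice_comp_comul, ← hΔ, smashCounit_eq_comp_leftSlice]
  exact LinearMap.ext fun z => leftSlice_map _ _ _ _

lemma IsHomCoalgebra.rightSlice_comp_of_smashComul (hB : IsHomCoalgebra k αB ΔB εB)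
    (hH : IsHomCoalgebra k αH ΔH εH)
    (hΔ : rightSlice (smashCounit k εB εH) ∘ₗ smashComul k φ ΔB ΔH =
      map αB.toLinearMap αH.toLinearMap) :
    rightSlice εB ∘ₗ φ = leftSlice εB := by
  have hα := map_surjective αB.surjective αH.surjective
  refine (LinearMap.cancel_right hα).1 ?_
  rw [LinearMap.comp_assoc, ← map_leftSlice_rightSlice_comp_smashComul hB.leftSlice_comp_comul
    hH.rightSlice_comp_comul, ← hΔ, smashCounit_eq_comp_rightSlice]
  exact LinearMap.ext fun z => rightSlice_map _ _ _ _

lemma IsHomCoalgebra.map_rightSlice_rightSlice_smashComul (hH : IsHomCoalgebra k αH ΔH εH)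
    (hM3 : leftSlice εH ∘ₗ φ = rightSlice εH) (z : B ⊗[k] H) :
    map (rightSlice εH) (rightSlice εH) (smashComul k φ ΔB ΔH z) = ΔB (rightSlice εH z) := by
  rw [smashComul_eq_middleMap_comp, LinearMap.comp_apply, map_rightSlice_rightSlice_middleMap hM3,
    rightSlice_map, LinearMap.comp_assoc, hH.rightSlice_comp_comul, hH.counit_comp]

lemma IsHomCoalgebra.map_leftSlice_leftSlice_smashComul (hB : IsHomCoalgebra k αB ΔB εB)
    (hM4 : rightSlice εB ∘ₗ φ = leftSlice εB) (z : B ⊗[k] H) :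
    map (leftSlice εB) (leftSlice εB) (smashComul k φ ΔB ΔH z) = ΔH (leftSlice εB z) := by
  rw [smashComul_eq_middleMap_comp, LinearMap.comp_apply, map_leftSlice_leftSlice_middleMap hM4,
    leftSlice_map, LinearMap.comp_assoc, hB.leftSlice_comp_comul, hB.counit_comp]

lemma IsHomCoalgebra.map_id_rightSlice_smashComul (hH : IsHomCoalgebra k αH ΔH εH)
    (z : B ⊗[k] H) :
    map LinearMap.id (rightSlice εH) (smashComul k φ ΔB ΔH z) =
      (TensorProduct.assoc k B H B).symm (map LinearMap.id φ
        (TensorProduct.assoc k B B H (map ΔB αH.toLinearMap z))) := by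
  rw [smashComul_eq_middleMap_comp, LinearMap.comp_apply, map_id_rightSlice_middleMap, map_map,
    hH.rightSlice_comp_comul, LinearMap.id_comp]

lemma IsHomCoalgebra.map_leftSlice_id_smashComul (hB : IsHomCoalgebra k αB ΔB εB)
    (z : B ⊗[k] H) :
    map (leftSlice εB) LinearMap.id (smashComul k φ ΔB ΔH z) =
      TensorProduct.assoc k H B H (map φ LinearMap.id
        ((TensorProduct.assoc k B H H).symm (map αB.toLinearMap ΔH z))) := by
  rw [smashComul_eq_middleMap_comp, LinearMap.comp_apply, map_leftSlice_id_middleMap, map_map,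
    hB.leftSlice_comp_comul, LinearMap.id_comp]

lemma IsHomCoalgebra.map_comul_comp_eq_crossLeftPair_comp (hB : IsHomCoalgebra k αB ΔB εB)
    (hH : IsHomCoalgebra k αH ΔH εH)
    (hnat : φ ∘ₗ map αB.toLinearMap αH.toLinearMap = map αH.toLinearMap αB.toLinearMap ∘ₗ φ)
    (hM3 : leftSlice εH ∘ₗ φ = rightSlice εH)
    (hΔ : IsHomCoassoc (map αB.toLinearMap αH.toLinearMap) (smashComul k φ ΔB ΔH)) :
    map αH.toLinearMap ΔB ∘ₗ φ = crossLeftPair φ ∘ₗ map ΔB αH.toLinearMap := by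
  have hα := map_surjective αB.surjective αH.surjective
  refine (LinearMap.cancel_right hα).1 (LinearMap.ext fun z => ?_)
  have hφ := map_leftSlice_rightSlice_comp_smashComul (φ := φ) hB.leftSlice_comp_comul
    hH.rightSlice_comp_comul
  have hΔB : map (rightSlice εH) (rightSlice εH) ∘ₗ smashComul k φ ΔB ΔH = ΔB ∘ₗ rightSlice εH :=
    LinearMap.ext (hH.map_rightSlice_rightSlice_smashComul hM3)
  have hcoassoc := LinearMap.congr_fun hΔ z
  simp only [LinearMap.comp_apply, LinearEquiv.coe_coe] at hcoassoc
  calc map αH.toLinearMap ΔB (φ (map αB.toLinearMap αH.toLinearMap z))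
      = map αH.toLinearMap ΔB (map (leftSlice εB) (rightSlice εH) (smashComul k φ ΔB ΔH z)) :=
        congrArg _ (LinearMap.congr_fun hφ z).symm
    _ = map (leftSlice εB) (map (rightSlice εH) (rightSlice εH))
          (map (map αB.toLinearMap αH.toLinearMap) (smashComul k φ ΔB ΔH)
            (smashComul k φ ΔB ΔH z)) := by
        rw [map_map, map_map, hΔB, hB.leftSlice_comp_map]
    _ = TensorProduct.assoc k _ _ _
          (map (map (leftSlice εB) (rightSlice εH) ∘ₗ smashComul k φ ΔB ΔH)
            (rightSlice εH ∘ₗ map αB.toLinearMap αH.toLinearMap) (smashComul k φ ΔB ΔH z)) := by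
        rw [hcoassoc, map_map_assoc, map_map]
    _ = TensorProduct.assoc k _ _ _ (map (map αH.toLinearMap αB.toLinearMap) αB.toLinearMap
          (map φ LinearMap.id (map LinearMap.id (rightSlice εH) (smashComul k φ ΔB ΔH z)))) := by
        simp only [hφ, hnat, hH.rightSlice_comp_map, map_map, LinearMap.id_comp, LinearMap.comp_id]
    _ = map αH.toLinearMap (map αB.toLinearMap αB.toLinearMap)
          (crossLeftPair φ (map ΔB αH.toLinearMap z)) := by
        rw [hH.map_id_rightSlice_smashComul, ← map_map_assoc]
        rfl
    _ = crossLeftPair φ (map ΔB αH.toLinearMap (map αB.toLinearMap αH.toLinearMap z)) := by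
        rw [map_crossLeftPair hnat.symm, map_map, map_map, hB.comul_comp]

lemma IsHomCoalgebra.map_comul_comp_eq_crossRightPair_comp (hB : IsHomCoalgebra k αB ΔB εB)
    (hH : IsHomCoalgebra k αH ΔH εH)
    (hnat : φ ∘ₗ map αB.toLinearMap αH.toLinearMap = map αH.toLinearMap αB.toLinearMap ∘ₗ φ)
    (hM4 : rightSlice εB ∘ₗ φ = leftSlice εB)
    (hΔ : IsHomCoassoc (map αB.toLinearMap αH.toLinearMap) (smashComul k φ ΔB ΔH)) :
    map ΔH αB.toLinearMap ∘ₗ φ = crossRightPair φ ∘ₗ map αB.toLinearMap ΔH := by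
  have hα := map_surjective αB.surjective αH.surjective
  refine (LinearMap.cancel_right hα).1 (LinearMap.ext fun z => ?_)
  have hφ := map_leftSlice_rightSlice_comp_smashComul (φ := φ) hB.leftSlice_comp_comul
    hH.rightSlice_comp_comul
  have hΔH : map (leftSlice εB) (leftSlice εB) ∘ₗ smashComul k φ ΔB ΔH = ΔH ∘ₗ leftSlice εB :=
    LinearMap.ext (hB.map_leftSlice_leftSlice_smashComul hM4)
  have hcoassoc := LinearMap.congr_fun hΔ z
  simp only [LinearMap.comp_apply, LinearEquiv.coe_coe] at hcoassoc
  calc map ΔH αB.toLinearMap (φ (map αB.toLinearMap αH.toLinearMap z))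
      = map ΔH αB.toLinearMap (map (leftSlice εB) (rightSlice εH) (smashComul k φ ΔB ΔH z)) :=
        congrArg _ (LinearMap.congr_fun hφ z).symm
    _ = map (map (leftSlice εB) (leftSlice εB)) (rightSlice εH)
          (map (smashComul k φ ΔB ΔH) (map αB.toLinearMap αH.toLinearMap)
            (smashComul k φ ΔB ΔH z)) := by
        rw [map_map, map_map, hΔH, hH.rightSlice_comp_map]
    _ = (TensorProduct.assoc k _ _ _).symm (map (leftSlice εB ∘ₗ map αB.toLinearMap αH.toLinearMap)
          (map (leftSlice εB) (rightSlice εH) ∘ₗ smashComul k φ ΔB ΔH)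
          (smashComul k φ ΔB ΔH z)) := by
        rw [← map_map, hcoassoc, ← map_map_assoc_symm, LinearEquiv.symm_apply_apply]
    _ = (TensorProduct.assoc k _ _ _).symm (map αH.toLinearMap (map αH.toLinearMap αB.toLinearMap)
          (map LinearMap.id φ (map (leftSlice εB) LinearMap.id (smashComul k φ ΔB ΔH z)))) := by
        simp only [hφ, hnat, hB.leftSlice_comp_map, map_map, LinearMap.id_comp, LinearMap.comp_id]
    _ = map (map αH.toLinearMap αH.toLinearMap) αB.toLinearMap
          (crossRightPair φ (map αB.toLinearMap ΔH z)) := by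
        rw [hB.map_leftSlice_id_smashComul, ← map_map_assoc_symm]
        rfl
    _ = crossRightPair φ (map αB.toLinearMap ΔH (map αB.toLinearMap αH.toLinearMap z)) := by
        rw [map_crossRightPair hnat.symm, map_map, map_map, hH.comul_comp]

theorem isHomCotwistor_iff_isHomCoalgebra_smashComul (hB : IsHomCoalgebra k αB ΔB εB)
    (hH : IsHomCoalgebra k αH ΔH εH) :
    IsHomCotwistor k αB ΔB εB αH ΔH εH φ ↔
      IsHomCoalgebra k (TensorProduct.congr αB αH) (smashComul k φ ΔB ΔH)
        (smashCounit k εB εH) := by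
  refine ⟨fun h => h.isHomCoalgebra_smashComul hB hH, fun h => ?_⟩
  have hnat := hB.comp_map_eq_map_comp_of_smashComul hH h
  have hM3 := hB.leftSlice_comp_of_smashComul hH h.leftSlice_comp_comul
  have hM4 := hB.rightSlice_comp_of_smashComul hH h.rightSlice_comp_comul
  exact ⟨hnat, hB.map_comul_comp_eq_crossLeftPair_comp hH hnat hM3 h.isHomCoassoc,
    hB.map_comul_comp_eq_crossRightPair_comp hH hnat hM4 h.isHomCoassoc, hM3, hM4⟩

end SmashCoalgebra

section Multiplicative

variable {k}
variable {M N P Q : Type*} [AddCommGroup M] [Module k M] [AddCommGroup N] [Module k N]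
variable [AddCommGroup P] [Module k P] [AddCommGroup Q] [Module k Q]

lemma smashMul_tmul (μ : M →ₗ[k] M →ₗ[k] M) (ν : N →ₗ[k] N →ₗ[k] N) (a a' : M) (b b' : N) :
    smashMul k μ ν (a ⊗ₜ[k] b) (a' ⊗ₜ[k] b') = μ a a' ⊗ₜ[k] ν b b' :=
  rfl

/-- `f` is multiplicative from `(M, μ)` to `(N, ν)`. The products are bare bilinear maps, with no
associativity or unit, so that the notion applies to Hom-algebras and their tensor products. -/
def IsMulMap (μ : M →ₗ[k] M →ₗ[k] M) (ν : N →ₗ[k] N →ₗ[k] N) (f : M →ₗ[k] N) : Prop :=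
  ∀ a b, f (μ a b) = ν (f a) (f b)

namespace IsMulMap

variable {μ : M →ₗ[k] M →ₗ[k] M} {ν : N →ₗ[k] N →ₗ[k] N} {ξ : P →ₗ[k] P →ₗ[k] P}
variable {ρ : Q →ₗ[k] Q →ₗ[k] Q}

lemma id : IsMulMap μ μ LinearMap.id :=
  fun _ _ => rfl

lemma comp {g : N →ₗ[k] P} {f : M →ₗ[k] N} (hg : IsMulMap ν ξ g) (hf : IsMulMap μ ν f) :
    IsMulMap μ ξ (g ∘ₗ f) :=
  fun a b => (congrArg g (hf a b)).trans (hg _ _)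

lemma of_comp_surjective {g : N →ₗ[k] P} {f : M →ₗ[k] N} (hgf : IsMulMap μ ξ (g ∘ₗ f))
    (hf : IsMulMap μ ν f) (hsurj : Function.Surjective f) : IsMulMap ν ξ g := by
  refine hsurj.forall₂.2 fun a b => ?_
  rw [← hf]
  exact hgf a b

lemma symm {e : M ≃ₗ[k] N} (he : IsMulMap μ ν e.toLinearMap) : IsMulMap ν μ e.symm.toLinearMap :=
  of_comp_surjective (f := e.toLinearMap) (by simpa using id) he e.surjective

lemma of_tmul {f : M ⊗[k] N →ₗ[k] P}
    (h : ∀ a b a' b', f (μ a a' ⊗ₜ[k] ν b b') = ξ (f (a ⊗ₜ[k] b)) (f (a' ⊗ₜ[k] b'))) :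
    IsMulMap (smashMul k μ ν) ξ f := fun s t => by
  induction s with
  | zero => simp
  | add s s' hs hs' => simp only [map_add, LinearMap.add_apply, hs, hs']
  | tmul a b =>
    induction t with
    | zero => simp
    | add t t' ht ht' => simp only [map_add, ht, ht']
    | tmul a' b' => rw [smashMul_tmul, h]

lemma tensorMap {f : M →ₗ[k] P} {g : N →ₗ[k] Q} (hf : IsMulMap μ ξ f) (hg : IsMulMap ν ρ g) :
    IsMulMap (smashMul k μ ν) (smashMul k ξ ρ) (map f g) :=
  of_tmul fun a b a' b' => by simp only [map_tmul, smashMul_tmul, hf a a', hg b b']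

lemma assoc : IsMulMap (smashMul k (smashMul k μ ν) ξ) (smashMul k μ (smashMul k ν ξ))
    (TensorProduct.assoc k M N P).toLinearMap :=
  of_tmul fun s c s' c' => by
    induction s with
    | zero => simp
    | add s t hs ht => simp only [map_add, add_tmul, LinearMap.add_apply, hs, ht]
    | tmul a b =>
      induction s' with
      | zero => simp
      | add s t hs ht => simp only [map_add, add_tmul, hs, ht]
      | tmul a' b' => simp [smashMul_tmul]

lemma leftSlice {f : M →ₗ[k] k} (hf : IsMulMap μ (LinearMap.mul k k) f) :
    IsMulMap (smashMul k μ ν) ν (leftSlice f) :=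
  of_tmul fun a b a' b' => by simp [hf a a', smul_smul, mul_comm]

lemma rightSlice {f : N →ₗ[k] k} (hf : IsMulMap ν (LinearMap.mul k k) f) :
    IsMulMap (smashMul k μ ν) μ (rightSlice f) :=
  of_tmul fun a b a' b' => by simp [hf b b', smul_smul, mul_comm]

lemma middleMap {X Y : Type*} [AddCommGroup X] [Module k X] [AddCommGroup Y] [Module k Y]
    {σ : X →ₗ[k] X →ₗ[k] X} {τ : Y →ₗ[k] Y →ₗ[k] Y}
    {ψ : M ⊗[k] N →ₗ[k] P ⊗[k] Q} (hψ : IsMulMap (smashMul k μ ν) (smashMul k ξ ρ) ψ) :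
    IsMulMap (smashMul k (smashMul k σ μ) (smashMul k ν τ))
      (smashMul k (smashMul k σ ξ) (smashMul k ρ τ)) (middleMap ψ) :=
  assoc.symm.comp <| (id.tensorMap assoc).comp <| (id.tensorMap (hψ.tensorMap id)).comp <|
    (id.tensorMap assoc.symm).comp assoc

end IsMulMap

lemma smashMul_assoc {α : M →ₗ[k] M} {μ : M →ₗ[k] M →ₗ[k] M} {β : N →ₗ[k] N}
    {ν : N →ₗ[k] N →ₗ[k] N} (hμ : ∀ a b c, μ (α a) (μ b c) = μ (μ a b) (α c))
    (hν : ∀ a b c, ν (β a) (ν b c) = ν (ν a b) (β c)) (s t u : M ⊗[k] N) :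
    smashMul k μ ν (map α β s) (smashMul k μ ν t u) =
      smashMul k μ ν (smashMul k μ ν s t) (map α β u) := by
  induction s with
  | zero => simp
  | add s s' hs hs' => simp only [map_add, LinearMap.add_apply, hs, hs']
  | tmul a b =>
    induction t with
    | zero => simp
    | add t t' ht ht' => simp only [map_add, LinearMap.add_apply, ht, ht']
    | tmul a' b' =>
      induction u with
      | zero => simp
      | add u u' hu hu' => simp only [map_add, hu, hu']
      | tmul a'' b'' => simp only [map_tmul, smashMul_tmul, hμ, hν]

lemma smashMul_tmul_left (μ : M →ₗ[k] M →ₗ[k] M) (ν : N →ₗ[k] N →ₗ[k] N) (a : M) (b : N) :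
    smashMul k μ ν (a ⊗ₜ[k] b) = map (μ a) (ν b) :=
  TensorProduct.ext' fun _ _ => rfl

lemma smashMul_flip_tmul (μ : M →ₗ[k] M →ₗ[k] M) (ν : N →ₗ[k] N →ₗ[k] N) (a : M) (b : N) :
    (smashMul k μ ν).flip (a ⊗ₜ[k] b) = map (μ.flip a) (ν.flip b) :=
  TensorProduct.ext' fun _ _ => rfl

lemma isHomAlgebra_smashMul {α : M ≃ₗ[k] M} {μ : M →ₗ[k] M →ₗ[k] M} {e : M} {β : N ≃ₗ[k] N}
    {ν : N →ₗ[k] N →ₗ[k] N} {e' : N} (hM : IsHomAlgebra k α μ e) (hN : IsHomAlgebra k β ν e') :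
    IsHomAlgebra k (TensorProduct.congr α β) (smashMul k μ ν) (e ⊗ₜ[k] e') := by
  obtain ⟨hμ, hμ_assoc, he, he_left, he_right⟩ := hM
  obtain ⟨hν, hν_assoc, he', he'_left, he'_right⟩ := hN
  have hμe : μ e = α.toLinearMap := LinearMap.ext he_left
  have hνe' : ν e' = β.toLinearMap := LinearMap.ext he'_left
  have hμe_flip : μ.flip e = α.toLinearMap := LinearMap.ext he_right
  have hνe'_flip : ν.flip e' = β.toLinearMap := LinearMap.ext he'_right
  have hleft : smashMul k μ ν (e ⊗ₜ[k] e') = map α.toLinearMap β.toLinearMap := by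
    rw [smashMul_tmul_left, hμe, hνe']
  have hright : (smashMul k μ ν).flip (e ⊗ₜ[k] e') = map α.toLinearMap β.toLinearMap := by
    rw [smashMul_flip_tmul, hμe_flip, hνe'_flip]
  exact ⟨IsMulMap.tensorMap (f := α.toLinearMap) (g := β.toLinearMap) hμ hν,
    smashMul_assoc (α := α.toLinearMap) (β := β.toLinearMap) hμ_assoc hν_assoc,
    by simp [he, he'], LinearMap.congr_fun hleft, LinearMap.congr_fun hright⟩

end Multiplicative

section SmashBialgebra

variable {k}
variable {B H : Type*} [AddCommGroup B] [Module k B] [AddCommGroup H] [Module k H]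
variable {αB : B ≃ₗ[k] B} {μB : B →ₗ[k] B →ₗ[k] B} {eB : B}
variable {ΔB : B →ₗ[k] B ⊗[k] B} {εB : B →ₗ[k] k}
variable {αH : H ≃ₗ[k] H} {μH : H →ₗ[k] H →ₗ[k] H} {eH : H}
variable {ΔH : H →ₗ[k] H ⊗[k] H} {εH : H →ₗ[k] k}
variable {φ : B ⊗[k] H →ₗ[k] H ⊗[k] B}

lemma isMulMap_smashMul_iff :
    IsMulMap (smashMul k μB μH) (smashMul k μH μB) φ ↔
      map (lift μH) (lift μB) ∘ₗ (tensorTensorTensorComm k H B H B).toLinearMap ∘ₗ map φ φ =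
        φ ∘ₗ map (lift μB) (lift μH) ∘ₗ (tensorTensorTensorComm k B H B H).toLinearMap :=
  ⟨fun h => TensorProduct.ext' fun s t => (h s t).symm,
    fun h s t => (LinearMap.congr_fun h (s ⊗ₜ[k] t)).symm⟩

namespace IsHomBialgebra

lemma isMulMap_map (h : IsHomBialgebra k αB μB eB ΔB εB) : IsMulMap μB μB αB.toLinearMap :=
  h.1.1

lemma isMulMap_comul (h : IsHomBialgebra k αB μB eB ΔB εB) :
    IsMulMap μB (smashMul k μB μB) ΔB :=
  h.2.2.1

lemma map_one (h : IsHomBialgebra k αB μB eB ΔB εB) : αB eB = eB :=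
  h.1.2.2.1

lemma comul_one (h : IsHomBialgebra k αB μB eB ΔB εB) : ΔB eB = eB ⊗ₜ[k] eB :=
  h.2.2.2.1

lemma isMulMap_counit (h : IsHomBialgebra k αB μB eB ΔB εB) :
    IsMulMap μB (LinearMap.mul k k) εB :=
  h.2.2.2.2.1

lemma counit_one (h : IsHomBialgebra k αB μB eB ΔB εB) : εB eB = 1 :=
  h.2.2.2.2.2

lemma isMulMap_smashCounit (hB : IsHomBialgebra k αB μB eB ΔB εB)
    (hH : IsHomBialgebra k αH μH eH ΔH εH) :
    IsMulMap (smashMul k μB μH) (LinearMap.mul k k) (smashCounit k εB εH) := by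
  rw [smashCounit_eq_comp_leftSlice]
  exact hH.isMulMap_counit.comp hB.isMulMap_counit.leftSlice

lemma smashCounit_one (hB : IsHomBialgebra k αB μB eB ΔB εB)
    (hH : IsHomBialgebra k αH μH eH ΔH εH) : smashCounit k εB εH (eB ⊗ₜ[k] eH) = 1 := by
  simp [smashCounit_eq_comp_leftSlice, hB.counit_one, hH.counit_one]

lemma isMulMap_smashComul_iff (hB : IsHomBialgebra k αB μB eB ΔB εB)
    (hH : IsHomBialgebra k αH μH eH ΔH εH) :
    IsMulMap (smashMul k μB μH) (smashMul k (smashMul k μB μH) (smashMul k μB μH))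
      (smashComul k φ ΔB ΔH) ↔ IsMulMap (smashMul k μB μH) (smashMul k μH μB) φ := by
  refine ⟨fun h => ?_, fun h => ?_⟩
  · refine IsMulMap.of_comp_surjective ?_ (hB.isMulMap_map.tensorMap hH.isMulMap_map)
      (map_surjective αB.surjective αH.surjective)
    rw [← map_leftSlice_rightSlice_comp_smashComul hB.2.1.leftSlice_comp_comul
      hH.2.1.rightSlice_comp_comul]
    exact (hB.isMulMap_counit.leftSlice.tensorMap hH.isMulMap_counit.rightSlice).comp h
  · rw [smashComul_eq_middleMap_comp]
    exact (IsMulMap.middleMap h).comp (hB.isMulMap_comul.tensorMap hH.isMulMap_comul)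

lemma smashComul_one_iff (hB : IsHomBialgebra k αB μB eB ΔB εB)
    (hH : IsHomBialgebra k αH μH eH ΔH εH) :
    smashComul k φ ΔB ΔH (eB ⊗ₜ[k] eH) = (eB ⊗ₜ[k] eH) ⊗ₜ[k] (eB ⊗ₜ[k] eH) ↔
      φ (eB ⊗ₜ[k] eH) = eH ⊗ₜ[k] eB := by
  refine ⟨fun h => ?_, fun h => ?_⟩
  · have hφ := LinearMap.congr_fun (map_leftSlice_rightSlice_comp_smashComul (φ := φ)
      hB.2.1.leftSlice_comp_comul hH.2.1.rightSlice_comp_comul) (eB ⊗ₜ[k] eH)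
    simpa [h, hB.map_one, hH.map_one, hB.counit_one, hH.counit_one] using hφ.symm
  · rw [smashComul_eq_middleMap_comp, LinearMap.comp_apply, map_tmul, hB.comul_one, hH.comul_one,
      middleMap_tmul, h]
    simp

end IsHomBialgebra

end SmashBialgebra

theorem isMonoidalHomCotwistor_iff_smashCoproduct_isHomBialgebra_general
    {B H : Type*} [AddCommGroup B] [Module k B] [AddCommGroup H] [Module k H]
    (αB : B ≃ₗ[k] B) (μB : B →ₗ[k] B →ₗ[k] B) (eB : B)
    (ΔB : B →ₗ[k] B ⊗[k] B) (εB : B →ₗ[k] k)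
    (αH : H ≃ₗ[k] H) (μH : H →ₗ[k] H →ₗ[k] H) (eH : H)
    (ΔH : H →ₗ[k] H ⊗[k] H) (εH : H →ₗ[k] k)
    (hB : IsHomBialgebra k αB μB eB ΔB εB) (hH : IsHomBialgebra k αH μH eH ΔH εH)
    (φ : B ⊗[k] H →ₗ[k] H ⊗[k] B) :
    IsMonoidalHomCotwistor k αB μB eB ΔB εB αH μH eH ΔH εH φ ↔
      IsHomBialgebra k (TensorProduct.congr αB αH) (smashMul k μB μH)
        (eB ⊗ₜ[k] eH) (smashComul k φ ΔB ΔH) (smashCounit k εB εH) := by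
  rw [IsMonoidalHomCotwistor, ← isMulMap_smashMul_iff, ← hB.isMulMap_smashComul_iff hH,
    ← hB.smashComul_one_iff hH, isHomCotwistor_iff_isHomCoalgebra_smashComul hB.2.1 hH.2.1]
  exact ⟨fun ⟨hcoalg, hmul, hone⟩ => ⟨isHomAlgebra_smashMul hB.1 hH.1, hcoalg, hmul, hone,
      hB.isMulMap_smashCounit hH, hB.smashCounit_one hH⟩,
    fun ⟨_, hcoalg, hmul, hone, _, _⟩ => ⟨hcoalg, hmul, hone⟩⟩

/-- `φ` is a monoidal Hom-cotwistor iff the smash coproduct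
`B ⊗ H` (with componentwise product) is a Hom-bialgebra. -/
theorem isMonoidalHomCotwistor_iff_smashCoproduct_isHomBialgebra
    {B H : Type*} [AddCommGroup B] [Module k B] [AddCommGroup H] [Module k H]
    (αB : B ≃ₗ[k] B) (μB : B →ₗ[k] B →ₗ[k] B) (eB : B)
    (ΔB : B →ₗ[k] B ⊗[k] B) (εB : B →ₗ[k] k)
    (αH : H ≃ₗ[k] H) (μH : H →ₗ[k] H →ₗ[k] H) (eH : H)
    (ΔH : H →ₗ[k] H ⊗[k] H) (εH : H →ₗ[k] k)
    (hB : IsHomBialgebra k αB μB eB ΔB εB) (hH : IsHomBialgebra k αH μH eH ΔH εH)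
    (φ : B ⊗[k] H →ₗ[k] H ⊗[k] B)
    (hnat : φ ∘ₗ TensorProduct.map αB.toLinearMap αH.toLinearMap
          = TensorProduct.map αH.toLinearMap αB.toLinearMap ∘ₗ φ) :
    IsMonoidalHomCotwistor k αB μB eB ΔB εB αH μH eH ΔH εH φ ↔
      IsHomBialgebra k (TensorProduct.congr αB αH) (smashMul k μB μH)
        (eB ⊗ₜ[k] eH) (smashComul k φ ΔB ΔH) (smashCounit k εB εH) :=
  isMonoidalHomCotwistor_iff_smashCoproduct_isHomBialgebra_general k αB μB eB ΔB εB αH μH eH ΔH εH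
    hB hH φ
end
end

section
/- Let (H, A, Φ) be a Hom-entwining structure over a field k (A a Hom-algebra, H a Hom-coalgebra) and let n ∈ ℤ. Then H⊗A, with structure map α_H⊗α_A, right A-action (h⊗a)·x = α_H(h) ⊗ a α_A^{-1}(x), and right H-coaction ρ(h⊗a) = Σ (h₁ ⊗ α_A^{n+1}((α_A^{-n}(a))_Φ)) ⊗ (h₂)^Φ (where Φ is applied to h₂ ⊗ α_A^{-n}(a)), is an n-th Hom-entwined module. -/
open TensorProduct BigOperators

noncomputable section

variable (k : Type*) [Field k]

/-!
The structure on `H ⊗ A` is the case `V = H` of an induction functor: for a right `H`-Hom-comodule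
`V` with coaction `v ↦ Σ v₀ ⊗ v₁`, the space `V ⊗ A` with the action
`(v ⊗ a) · x = αV v ⊗ a αA⁻¹(x)` and the coaction `ρ(v ⊗ a) = Σ (v₀ ⊗ αA(a_Φ)) ⊗ v₁^Φ` is a `0`-th
Hom-entwined module. Here (E1) makes `ρ` compatible with the action, (E2) makes it coassociative
and (E3) makes it counital.

A general `n` reduces to `n = 0` by conjugation. Since `Φ` commutes with the structure maps,
`(αA^n ⊗ id) Φ (id ⊗ αA^(-n)) = (id ⊗ αH^(-n)) Φ (αH^n ⊗ id)`, and the `n`-th condition for `Φ` is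
the `0`-th condition for this map. It is again a Hom-entwining map, because `αA^n` is an
automorphism of the Hom-algebra `A`.
-/

section LeftWhisker

variable {R : Type*} [CommSemiring R]
variable {U U' M M' N N' P P' Q Q' S T : Type*}
variable [AddCommMonoid U] [Module R U] [AddCommMonoid U'] [Module R U']
variable [AddCommMonoid M] [Module R M] [AddCommMonoid M'] [Module R M']
variable [AddCommMonoid N] [Module R N] [AddCommMonoid N'] [Module R N']
variable [AddCommMonoid P] [Module R P] [AddCommMonoid P'] [Module R P']
variable [AddCommMonoid Q] [Module R Q] [AddCommMonoid Q'] [Module R Q']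
variable [AddCommMonoid S] [Module R S] [AddCommMonoid T] [Module R T]

variable (U) in
/-- The left whiskering `id_U ⊗ Φ` of `Φ : M ⊗ N → P ⊗ Q`, reassociated so that it moves `N` past
`M` on the right of `U`. The axioms of entwining maps, the entwined-module condition and the
induced coaction are all built from it. -/
def leftWhisker (Φ : M ⊗[R] N →ₗ[R] P ⊗[R] Q) : (U ⊗[R] M) ⊗[R] N →ₗ[R] (U ⊗[R] P) ⊗[R] Q :=
  (TensorProduct.assoc R U P Q).symm.toLinearMap
    ∘ₗ TensorProduct.map LinearMap.id Φ
    ∘ₗ (TensorProduct.assoc R U M N).toLinearMap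

theorem leftWhisker_tmul (Φ : M ⊗[R] N →ₗ[R] P ⊗[R] Q) (u : U) (m : M) (n : N) :
    leftWhisker U Φ ((u ⊗ₜ m) ⊗ₜ n) = (TensorProduct.assoc R U P Q).symm (u ⊗ₜ Φ (m ⊗ₜ n)) :=
  rfl

theorem map_leftWhisker {Φ : M ⊗[R] N →ₗ[R] P ⊗[R] Q} {Φ' : M' ⊗[R] N' →ₗ[R] P' ⊗[R] Q'}
    (f : U →ₗ[R] U') {m : M →ₗ[R] M'} {n : N →ₗ[R] N'} {p : P →ₗ[R] P'} {q : Q →ₗ[R] Q'}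
    (h : TensorProduct.map p q ∘ₗ Φ = Φ' ∘ₗ TensorProduct.map m n) (t : (U ⊗[R] M) ⊗[R] N) :
    TensorProduct.map (TensorProduct.map f p) q (leftWhisker U Φ t)
      = leftWhisker U' Φ' (TensorProduct.map (TensorProduct.map f m) n t) := by
  refine LinearMap.congr_fun (f := TensorProduct.map (TensorProduct.map f p) q ∘ₗ leftWhisker U Φ)
    (g := leftWhisker U' Φ' ∘ₗ TensorProduct.map (TensorProduct.map f m) n)
    (TensorProduct.ext_threefold fun u x y => ?_) t
  simpa [leftWhisker_tmul, TensorProduct.map_map_assoc_symm] using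
    congrArg (fun z => (TensorProduct.assoc R U' P' Q').symm (f u ⊗ₜ z))
      (LinearMap.congr_fun h (x ⊗ₜ y))

theorem leftWhisker_map_comp (p : P →ₗ[R] P') (q : Q →ₗ[R] Q') (Φ : M ⊗[R] N →ₗ[R] P ⊗[R] Q)
    (t : (U ⊗[R] M) ⊗[R] N) :
    leftWhisker U (TensorProduct.map p q ∘ₗ Φ) t
      = TensorProduct.map (TensorProduct.map LinearMap.id p) q (leftWhisker U Φ t) := by
  rw [map_leftWhisker (m := LinearMap.id) (n := LinearMap.id) LinearMap.id
    (by rw [TensorProduct.map_id, LinearMap.comp_id])]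
  simp only [TensorProduct.map_id, LinearMap.id_apply]

theorem leftWhisker_comp_map (Φ : M' ⊗[R] N' →ₗ[R] P ⊗[R] Q) (m : M →ₗ[R] M') (n : N →ₗ[R] N')
    (t : (U ⊗[R] M) ⊗[R] N) :
    leftWhisker U (Φ ∘ₗ TensorProduct.map m n) t
      = leftWhisker U Φ (TensorProduct.map (TensorProduct.map LinearMap.id m) n t) := by
  rw [← map_leftWhisker (Φ := Φ ∘ₗ TensorProduct.map m n) (p := LinearMap.id) (q := LinearMap.id)
    LinearMap.id (by rw [TensorProduct.map_id, LinearMap.id_comp])]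
  simp only [TensorProduct.map_id, LinearMap.id_apply]

theorem leftWhisker_assoc (Φ : M ⊗[R] P →ₗ[R] S ⊗[R] T) (Ψ : N ⊗[R] Q →ₗ[R] P ⊗[R] N')
    (t : (U ⊗[R] M) ⊗[R] N) (x : Q) :
    leftWhisker U ((TensorProduct.assoc R S T N').toLinearMap
        ∘ₗ TensorProduct.map Φ LinearMap.id ∘ₗ leftWhisker M Ψ)
        (TensorProduct.assoc R U M N t ⊗ₜ x)
      = TensorProduct.assoc R (U ⊗[R] S) T N'
          (TensorProduct.map (leftWhisker U Φ) LinearMap.id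
            (leftWhisker (U ⊗[R] M) Ψ (t ⊗ₜ x))) := by
  induction t using TensorProduct.induction_on with
  | zero => simp
  | add t t' ht ht' => simp only [map_add, TensorProduct.add_tmul, ht, ht']
  | tmul s y =>
    induction s using TensorProduct.induction_on with
    | zero => simp
    | add s s' hs hs' => simp only [map_add, TensorProduct.add_tmul, hs, hs']
    | tmul u m =>
      simp only [leftWhisker_tmul, TensorProduct.assoc_tmul, LinearMap.comp_apply,
        LinearEquiv.coe_coe]
      induction Ψ (y ⊗ₜ x) using TensorProduct.induction_on with
      | zero => simp
      | add w w' hw hw' => simp only [map_add, TensorProduct.tmul_add, hw, hw']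
      | tmul p y' =>
        simp only [TensorProduct.assoc_symm_tmul, TensorProduct.map_tmul, LinearMap.id_apply,
          leftWhisker_tmul]
        induction Φ (m ⊗ₜ p) using TensorProduct.induction_on with
        | zero => simp
        | add w w' hw hw' =>
          simp only [map_add, TensorProduct.tmul_add, TensorProduct.add_tmul, hw, hw']
        | tmul => rfl

theorem leftWhisker_assoc_symm (Φ : M ⊗[R] N →ₗ[R] P ⊗[R] Q) (Ψ : Q ⊗[R] N' →ₗ[R] S ⊗[R] T)
    (t : U ⊗[R] M) (x : N) (y : N') :
    leftWhisker U (leftWhisker P Ψ ∘ₗ TensorProduct.map Φ LinearMap.id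
        ∘ₗ (TensorProduct.assoc R M N N').symm.toLinearMap) (t ⊗ₜ (x ⊗ₜ y))
      = TensorProduct.map (TensorProduct.assoc R U P S).toLinearMap LinearMap.id
          (leftWhisker (U ⊗[R] P) Ψ (leftWhisker U Φ (t ⊗ₜ x) ⊗ₜ y)) := by
  induction t using TensorProduct.induction_on with
  | zero => simp
  | add t t' ht ht' => simp only [map_add, TensorProduct.add_tmul, ht, ht']
  | tmul u m =>
    simp only [leftWhisker_tmul, LinearMap.comp_apply, LinearEquiv.coe_coe,
      TensorProduct.assoc_symm_tmul, TensorProduct.map_tmul, LinearMap.id_apply]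
    induction Φ (m ⊗ₜ x) using TensorProduct.induction_on with
    | zero => simp
    | add w w' hw hw' =>
      simp only [map_add, TensorProduct.tmul_add, TensorProduct.add_tmul, hw, hw']
    | tmul p q =>
      simp only [TensorProduct.assoc_symm_tmul, leftWhisker_tmul]
      induction Ψ (q ⊗ₜ y) using TensorProduct.induction_on with
      | zero => simp
      | add w w' hw hw' => simp only [map_add, TensorProduct.tmul_add, hw, hw']
      | tmul => rfl

theorem map_assoc_map (p : P →ₗ[R] P') (Φ : M →ₗ[R] P ⊗[R] Q) (t : M ⊗[R] N) :
    TensorProduct.map p LinearMap.id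
        (TensorProduct.assoc R P Q N (TensorProduct.map Φ LinearMap.id t))
      = TensorProduct.assoc R P' Q N
          (TensorProduct.map (TensorProduct.map p LinearMap.id ∘ₗ Φ) LinearMap.id t) := by
  rw [← TensorProduct.map_id, TensorProduct.map_map_assoc, TensorProduct.map_map,
    LinearMap.id_comp]

theorem rid_leftWhisker_comm (t : U ⊗[R] R) (n : N) :
    TensorProduct.rid R (U ⊗[R] N) (leftWhisker U (TensorProduct.comm R R N).toLinearMap (t ⊗ₜ n))
      = TensorProduct.rid R U t ⊗ₜ n := by
  induction t using TensorProduct.induction_on with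
  | zero => simp
  | add t t' ht ht' => simp only [map_add, TensorProduct.add_tmul, ht, ht']
  | tmul u r => simp [leftWhisker_tmul, TensorProduct.smul_tmul']

end LeftWhisker

theorem semiconj_linearEquiv_zpow {R M N : Type*} [Semiring R] [AddCommMonoid M] [AddCommMonoid N]
    [Module R M] [Module R N] {T : M → N} {f : M ≃ₗ[R] M} {g : N ≃ₗ[R] N}
    (h : Function.Semiconj T f g) (n : ℤ) : Function.Semiconj T ⇑(f ^ n) ⇑(g ^ n) := by
  have h_inv : Function.Semiconj T ⇑f⁻¹ ⇑g⁻¹ :=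
    h.inverses_right f.apply_symm_apply g.symm_apply_apply
  induction n with
  | zero => exact Function.Semiconj.id_right
  | succ i ih =>
    rw [zpow_add_one, zpow_add_one]
    exact ih.comp_right h
  | pred i ih =>
    rw [zpow_sub_one, zpow_sub_one]
    exact ih.comp_right h_inv

section HomEntwining

variable {k}
variable {A B H U V : Type*}
variable [AddCommGroup A] [Module k A] [AddCommGroup B] [Module k B]
variable [AddCommGroup H] [Module k H]
variable [AddCommGroup U] [Module k U] [AddCommGroup V] [Module k V]
variable {αA : A ≃ₗ[k] A} {μ : A →ₗ[k] A →ₗ[k] A} {e : A}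
variable {αB : B ≃ₗ[k] B} {μB : B →ₗ[k] B →ₗ[k] B} {eB : B}
variable {αH : H ≃ₗ[k] H} {Δ : H →ₗ[k] H ⊗[k] H} {ε : H →ₗ[k] k}
variable {αU : U ≃ₗ[k] U} {act : U →ₗ[k] A →ₗ[k] U}
variable {αV : V ≃ₗ[k] V} {σ : V →ₗ[k] V ⊗[k] H}
variable {Φ : H ⊗[k] A →ₗ[k] A ⊗[k] H}

/-- Morphisms of Hom-algebras `(A, αA, μ, e) → (B, αB, μB, eB)`: linear maps which preserve the
multiplications and the units and intertwine the structure maps. -/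
structure IsHomAlgebraHom (αA : A ≃ₗ[k] A) (μ : A →ₗ[k] A →ₗ[k] A) (e : A)
    (αB : B ≃ₗ[k] B) (μB : B →ₗ[k] B →ₗ[k] B) (eB : B) (f : A →ₗ[k] B) : Prop where
  map_structure : ∀ a, f (αA a) = αB (f a)
  map_mul : ∀ a b, f (μ a b) = μB (f a) (f b)
  map_unit : f e = eB

theorem IsHomAlgebra.isHomAlgebraHom_zpow (hA : IsHomAlgebra k αA μ e) (n : ℤ) :
    IsHomAlgebraHom αA μ e αA μ e (αA ^ n).toLinearMap where
  map_structure := fun a => (semiconj_linearEquiv_zpow (T := αA) (fun _ => rfl) n a).symm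
  map_mul := fun a b => by
    have h_mul : Function.Semiconj (TensorProduct.lift μ) (TensorProduct.congr αA αA) αA := fun t =>
      LinearMap.congr_fun (f := TensorProduct.lift μ ∘ₗ (TensorProduct.congr αA αA).toLinearMap)
        (g := αA.toLinearMap ∘ₗ TensorProduct.lift μ)
        (TensorProduct.ext' fun x y => (hA.1 x y).symm) t
    simpa [TensorProduct.congr_zpow] using (semiconj_linearEquiv_zpow h_mul n (a ⊗ₜ b)).symm
  map_unit := by
    have h_unit : Function.Semiconj (fun _ : A => e) (LinearEquiv.refl k A) αA := fun _ =>
      hA.2.2.1.symm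
    exact (semiconj_linearEquiv_zpow h_unit n e).symm

theorem IsHomAlgebra.isHomAlgebraHom_symm (hA : IsHomAlgebra k αA μ e) :
    IsHomAlgebraHom αA μ e αA μ e αA.symm.toLinearMap := by
  have h_inv := hA.isHomAlgebraHom_zpow (-1)
  rwa [zpow_neg_one] at h_inv

theorem IsHomAlgebra.isHomModule_self (hA : IsHomAlgebra k αA μ e) :
    IsHomModule k αA μ e αA μ :=
  ⟨hA.1, hA.2.2.2.2, fun a b c => (hA.2.1 a b c).symm⟩

theorem IsHomCoalgebra.isHomComodule_self (hH : IsHomCoalgebra k αH Δ ε) :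
    IsHomComodule k αH Δ ε αH Δ :=
  ⟨hH.1, hH.2.2.1, hH.2.2.2.2⟩

theorem IsHomModule.restrictScalars {actB : U →ₗ[k] B →ₗ[k] U} {f : A →ₗ[k] B}
    (hU : IsHomModule k αB μB eB αU actB) (hf : IsHomAlgebraHom αA μ e αB μB eB f) :
    IsHomModule k αA μ e αU (actB.compl₂ f) := by
  obtain ⟨hU_structure, hU_unit, hU_assoc⟩ := hU
  refine ⟨fun u a => ?_, fun u => ?_, fun u a b => ?_⟩ <;> simp only [LinearMap.compl₂_apply]
  · rw [hU_structure, hf.map_structure]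
  · rw [hf.map_unit, hU_unit]
  · rw [hf.map_structure, hU_assoc, hf.map_mul]

/-- The right action `(v ⊗ u) · a = αV v ⊗ u · a` on `V ⊗ U` induced by a right action on `U`. -/
def tensorAction (αV : V ≃ₗ[k] V) (act : U →ₗ[k] A →ₗ[k] U) : V ⊗[k] U →ₗ[k] A →ₗ[k] V ⊗[k] U :=
  (TensorProduct.mk k (V ⊗[k] U) A).compr₂
    (TensorProduct.map αV.toLinearMap (TensorProduct.lift act)
      ∘ₗ (TensorProduct.assoc k V U A).toLinearMap)

theorem tensorAction_tmul (v : V) (u : U) (a : A) :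
    tensorAction αV act (v ⊗ₜ u) a = αV v ⊗ₜ act u a :=
  rfl

theorem IsHomModule.tensorAction (hU : IsHomModule k αA μ e αU act) (αV : V ≃ₗ[k] V) :
    IsHomModule k αA μ e (TensorProduct.congr αV αU) (tensorAction αV act) := by
  obtain ⟨hU_structure, hU_unit, hU_assoc⟩ := hU
  refine ⟨fun t a => ?_, fun t => ?_, fun t a b => ?_⟩ <;>
  · induction t using TensorProduct.induction_on with
    | zero => simp
    | add s t hs ht => simp only [map_add, LinearMap.add_apply, hs, ht]
    | tmul v u =>
      simp only [tensorAction_tmul, TensorProduct.congr_tmul, hU_structure, hU_unit, hU_assoc]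

/-- The map `v ⊗ a ↦ Σ (v₀ ⊗ a_Ψ) ⊗ v₁^Ψ` on `V ⊗ A` induced by a coaction `σ` on `V` and a map
`Ψ : H ⊗ A → A ⊗ H`. For an entwining map `Φ`, the choice making it a Hom-coaction is
`Ψ = (αA ⊗ id) Φ`. -/
def tensorCoaction (Ψ : H ⊗[k] A →ₗ[k] A ⊗[k] H) (σ : V →ₗ[k] V ⊗[k] H) :
    V ⊗[k] A →ₗ[k] (V ⊗[k] A) ⊗[k] H :=
  leftWhisker V Ψ ∘ₗ TensorProduct.map σ LinearMap.id

theorem map_tensorCoaction {Ψ : H ⊗[k] A →ₗ[k] A ⊗[k] H} {Ψ' : H ⊗[k] B →ₗ[k] B ⊗[k] H}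
    {σ : V →ₗ[k] V ⊗[k] H} {σ' : U →ₗ[k] U ⊗[k] H} {f : V →ₗ[k] U} {g : H →ₗ[k] H}
    {p q : A →ₗ[k] B} {r : H →ₗ[k] H}
    (hΨ : TensorProduct.map p r ∘ₗ Ψ = Ψ' ∘ₗ TensorProduct.map g q)
    (hσ : ∀ v, σ' (f v) = TensorProduct.map f g (σ v)) (t : V ⊗[k] A) :
    TensorProduct.map (TensorProduct.map f p) r (tensorCoaction Ψ σ t)
      = tensorCoaction Ψ' σ' (TensorProduct.map f q t) := by
  have h_map : σ' ∘ₗ f = TensorProduct.map f g ∘ₗ σ := LinearMap.ext hσ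
  simp only [tensorCoaction, LinearMap.comp_apply, map_leftWhisker f hΨ, TensorProduct.map_map,
    h_map, LinearMap.comp_id, LinearMap.id_comp]

/-- The map `(γ ⊗ id) Φ (id ⊗ γ⁻¹)` obtained from `Φ : H ⊗ A → A ⊗ H` by transporting `A` along
`γ : A ≃ B`. -/
def transportEntwining (γ : A ≃ₗ[k] B) (Φ : H ⊗[k] A →ₗ[k] A ⊗[k] H) :
    H ⊗[k] B →ₗ[k] B ⊗[k] H :=
  TensorProduct.map γ.toLinearMap LinearMap.id ∘ₗ Φ
    ∘ₗ TensorProduct.map LinearMap.id γ.symm.toLinearMap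

theorem transportEntwining_comp_map (γ : A ≃ₗ[k] B) (Φ : H ⊗[k] A →ₗ[k] A ⊗[k] H) :
    TensorProduct.map γ.toLinearMap LinearMap.id ∘ₗ Φ
      = transportEntwining γ Φ ∘ₗ TensorProduct.map LinearMap.id γ.toLinearMap := by
  refine TensorProduct.ext' fun h a => ?_
  simp [transportEntwining]

theorem transportEntwining_tmul (γ : A ≃ₗ[k] B) (Φ : H ⊗[k] A →ₗ[k] A ⊗[k] H) (h : H) (a : A) :
    transportEntwining γ Φ (h ⊗ₜ γ a)
      = TensorProduct.map γ.toLinearMap LinearMap.id (Φ (h ⊗ₜ a)) :=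
  (LinearMap.congr_fun (transportEntwining_comp_map γ Φ) (h ⊗ₜ a)).symm

namespace IsHomEntwining

theorem mul_comp (hΦ : IsHomEntwining k αA μ e αH Δ ε Φ) :
    TensorProduct.map (TensorProduct.lift μ) αH.toLinearMap ∘ₗ leftWhisker A Φ
        ∘ₗ TensorProduct.map Φ LinearMap.id
        ∘ₗ (TensorProduct.assoc k H A A).symm.toLinearMap
      = Φ ∘ₗ TensorProduct.map αH.toLinearMap (TensorProduct.lift μ) := by
  ext h a b
  exact LinearMap.congr_fun hΦ.2.1 ((h ⊗ₜ a) ⊗ₜ b)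

theorem leftWhisker_mul (hΦ : IsHomEntwining k αA μ e αH Δ ε Φ) (f : V →ₗ[k] U) (t : V ⊗[k] H)
    (a b : A) :
    leftWhisker U Φ (TensorProduct.map f αH.toLinearMap t ⊗ₜ μ a b)
      = TensorProduct.map (TensorProduct.map f (TensorProduct.lift μ)
          ∘ₗ (TensorProduct.assoc k V A A).toLinearMap) αH.toLinearMap
          (leftWhisker (V ⊗[k] A) Φ (leftWhisker V Φ (t ⊗ₜ a) ⊗ₜ b)) := by
  have h_mul := map_leftWhisker f hΦ.mul_comp (t ⊗ₜ (a ⊗ₜ b))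
  rw [leftWhisker_assoc_symm, TensorProduct.map_map, LinearMap.comp_id,
    TensorProduct.map_tmul] at h_mul
  exact h_mul.symm

theorem comul_comp (hΦ : IsHomEntwining k αA μ e αH Δ ε Φ) :
    TensorProduct.map αA.toLinearMap Δ ∘ₗ Φ
      = ((TensorProduct.assoc k A H H).toLinearMap ∘ₗ TensorProduct.map Φ LinearMap.id
          ∘ₗ leftWhisker H Φ) ∘ₗ TensorProduct.map Δ αA.toLinearMap :=
  hΦ.2.2.1

theorem comul_comp_map (hΦ : IsHomEntwining k αA μ e αH Δ ε Φ) (f : A →ₗ[k] B) :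
    TensorProduct.map f Δ ∘ₗ TensorProduct.map αA.toLinearMap LinearMap.id ∘ₗ Φ
      = ((TensorProduct.assoc k B H H).toLinearMap
          ∘ₗ TensorProduct.map (TensorProduct.map f LinearMap.id ∘ₗ Φ) LinearMap.id
          ∘ₗ leftWhisker H Φ) ∘ₗ TensorProduct.map Δ αA.toLinearMap := by
  refine LinearMap.ext fun s => ?_
  have h_entwine := congrArg (TensorProduct.map f LinearMap.id)
    (LinearMap.congr_fun hΦ.comul_comp s)
  simpa [TensorProduct.map_map, map_assoc_map] using h_entwine

theorem counit_comp (hΦ : IsHomEntwining k αA μ e αH Δ ε Φ) :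
    TensorProduct.map LinearMap.id ε ∘ₗ Φ
      = (TensorProduct.comm k k A).toLinearMap ∘ₗ TensorProduct.map ε LinearMap.id := by
  ext h a
  apply (TensorProduct.rid k A).injective
  simpa using LinearMap.congr_fun hΦ.2.2.2.1 (h ⊗ₜ a)

theorem structure_comp_transportEntwining (hΦ : IsHomEntwining k αA μ e αH Δ ε Φ) {γ : A ≃ₗ[k] B}
    (hγ : ∀ a, γ (αA a) = αB (γ a)) :
    TensorProduct.map αB.toLinearMap αH.toLinearMap ∘ₗ transportEntwining γ Φ
      = transportEntwining γ Φ ∘ₗ TensorProduct.map αH.toLinearMap αB.toLinearMap := by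
  have h_structure : αB.toLinearMap ∘ₗ γ.toLinearMap = γ.toLinearMap ∘ₗ αA.toLinearMap :=
    LinearMap.ext fun a => (hγ a).symm
  refine TensorProduct.ext' fun h b => ?_
  obtain ⟨a, rfl⟩ := γ.surjective b
  have h_entwine := congrArg (TensorProduct.map γ.toLinearMap LinearMap.id)
    (LinearMap.congr_fun hΦ.1 (h ⊗ₜ a))
  simpa [transportEntwining_tmul, TensorProduct.map_map, h_structure, ← hγ] using h_entwine

theorem mul_comp_transportEntwining (hΦ : IsHomEntwining k αA μ e αH Δ ε Φ) {γ : A ≃ₗ[k] B}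
    (hγ : ∀ a b, γ (μ a b) = μB (γ a) (γ b)) :
    TensorProduct.map (TensorProduct.lift μB) αH.toLinearMap
        ∘ₗ leftWhisker B (transportEntwining γ Φ)
        ∘ₗ TensorProduct.map (transportEntwining γ Φ) LinearMap.id
      = transportEntwining γ Φ ∘ₗ TensorProduct.map αH.toLinearMap (TensorProduct.lift μB)
        ∘ₗ (TensorProduct.assoc k H B B).toLinearMap := by
  refine TensorProduct.ext_threefold fun h x y => ?_
  obtain ⟨a, rfl⟩ := γ.surjective x
  obtain ⟨b, rfl⟩ := γ.surjective y
  have h_mul : TensorProduct.lift μB ∘ₗ TensorProduct.map γ.toLinearMap γ.toLinearMap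
      = γ.toLinearMap ∘ₗ TensorProduct.lift μ := TensorProduct.ext' fun a b => (hγ a b).symm
  have h_twice : leftWhisker B (transportEntwining γ Φ)
        (TensorProduct.map γ.toLinearMap LinearMap.id (Φ (h ⊗ₜ a)) ⊗ₜ γ b)
      = TensorProduct.map (TensorProduct.map γ.toLinearMap γ.toLinearMap) LinearMap.id
          (leftWhisker A Φ (Φ (h ⊗ₜ a) ⊗ₜ b)) := by
    rw [map_leftWhisker _ (transportEntwining_comp_map γ Φ)]
    rfl
  have h_entwine := congrArg (TensorProduct.map γ.toLinearMap LinearMap.id)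
    (LinearMap.congr_fun hΦ.mul_comp (h ⊗ₜ (a ⊗ₜ b)))
  simpa [h_twice, TensorProduct.map_map, h_mul, ← hγ, transportEntwining_tmul] using h_entwine

theorem comul_comp_transportEntwining (hΦ : IsHomEntwining k αA μ e αH Δ ε Φ) {γ : A ≃ₗ[k] B}
    (hγ : ∀ a, γ (αA a) = αB (γ a)) :
    TensorProduct.map αB.toLinearMap Δ ∘ₗ transportEntwining γ Φ
      = ((TensorProduct.assoc k B H H).toLinearMap
          ∘ₗ TensorProduct.map (transportEntwining γ Φ) LinearMap.id
          ∘ₗ leftWhisker H (transportEntwining γ Φ)) ∘ₗ TensorProduct.map Δ αB.toLinearMap := by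
  have h_structure : αB.toLinearMap ∘ₗ γ.toLinearMap = γ.toLinearMap ∘ₗ αA.toLinearMap :=
    LinearMap.ext fun a => (hγ a).symm
  refine TensorProduct.ext' fun h b => ?_
  obtain ⟨a, rfl⟩ := γ.surjective b
  have h_twice : TensorProduct.map (transportEntwining γ Φ) LinearMap.id
        (leftWhisker H (transportEntwining γ Φ) (Δ h ⊗ₜ γ (αA a)))
      = TensorProduct.map (TensorProduct.map γ.toLinearMap LinearMap.id ∘ₗ Φ) LinearMap.id
          (leftWhisker H Φ (Δ h ⊗ₜ αA a)) := by
    have h_once : leftWhisker H (transportEntwining γ Φ) (Δ h ⊗ₜ γ (αA a))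
        = TensorProduct.map (TensorProduct.map LinearMap.id γ.toLinearMap) LinearMap.id
            (leftWhisker H Φ (Δ h ⊗ₜ αA a)) := by
      rw [map_leftWhisker _ (transportEntwining_comp_map γ Φ), TensorProduct.map_id]
      rfl
    rw [h_once, TensorProduct.map_map, ← transportEntwining_comp_map, LinearMap.id_comp]
  have h_entwine := congrArg (TensorProduct.map γ.toLinearMap LinearMap.id)
    (LinearMap.congr_fun hΦ.comul_comp (h ⊗ₜ a))
  simpa [transportEntwining_tmul, TensorProduct.map_map, h_structure, ← hγ, h_twice,
    map_assoc_map] using h_entwine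

theorem transportEntwining (hΦ : IsHomEntwining k αA μ e αH Δ ε Φ) {γ : A ≃ₗ[k] B}
    (hγ : IsHomAlgebraHom αA μ e αB μB eB γ.toLinearMap) :
    IsHomEntwining k αB μB eB αH Δ ε (transportEntwining γ Φ) := by
  refine ⟨?_, ?_, ?_, ?_, fun h => ?_⟩
  · exact hΦ.structure_comp_transportEntwining hγ.map_structure
  · exact hΦ.mul_comp_transportEntwining hγ.map_mul
  · exact hΦ.comul_comp_transportEntwining hγ.map_structure
  · refine TensorProduct.ext' fun h b => ?_
    obtain ⟨a, rfl⟩ := γ.surjective b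
    have h_entwine := congrArg (TensorProduct.map γ.toLinearMap LinearMap.id)
      (LinearMap.congr_fun hΦ.counit_comp (h ⊗ₜ a))
    simpa [transportEntwining_tmul, TensorProduct.map_map] using
      congrArg (TensorProduct.rid k B) h_entwine
  · rw [← hγ.map_unit]
    simp [_root_.transportEntwining, hΦ.2.2.2.2]

end IsHomEntwining

theorem tensorCoaction_coassoc (hΦ : IsHomEntwining k αA μ e αH Δ ε Φ)
    (hσ : ∀ v, TensorProduct.map αV.toLinearMap Δ (σ v)
      = TensorProduct.assoc k V H H (TensorProduct.map σ αH.toLinearMap (σ v)))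
    (t : V ⊗[k] A) :
    let ρ := tensorCoaction (TensorProduct.map αA.toLinearMap LinearMap.id ∘ₗ Φ) σ
    TensorProduct.map (TensorProduct.map αV.toLinearMap αA.toLinearMap) Δ (ρ t)
      = TensorProduct.assoc k (V ⊗[k] A) H H (TensorProduct.map ρ αH.toLinearMap (ρ t)) := by
  intro ρ
  set Ψ := TensorProduct.map αA.toLinearMap LinearMap.id ∘ₗ Φ
  have h_iterate : ∀ s : (V ⊗[k] A) ⊗[k] H, TensorProduct.map ρ αH.toLinearMap
      (TensorProduct.map (TensorProduct.map LinearMap.id αA.toLinearMap) LinearMap.id s)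
      = TensorProduct.map (leftWhisker V Ψ) LinearMap.id
          (TensorProduct.map (TensorProduct.map σ αA.toLinearMap) αH.toLinearMap s) := fun s => by
    simp only [ρ, Ψ, tensorCoaction, TensorProduct.map_map, LinearMap.comp_id, LinearMap.id_comp,
      LinearMap.comp_assoc, ← TensorProduct.map_comp]
  induction t using TensorProduct.induction_on with
  | zero => simp
  | add s t hs ht => simp only [map_add, hs, ht]
  | tmul v a =>
    calc TensorProduct.map (TensorProduct.map αV.toLinearMap αA.toLinearMap) Δ (ρ (v ⊗ₜ a))
      _ = leftWhisker V ((TensorProduct.assoc k A H H).toLinearMap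
            ∘ₗ TensorProduct.map Ψ LinearMap.id ∘ₗ leftWhisker H Φ)
            (TensorProduct.assoc k V H H (TensorProduct.map σ αH.toLinearMap (σ v)) ⊗ₜ αA a) := by
        rw [← hσ]
        exact map_leftWhisker αV.toLinearMap (hΦ.comul_comp_map αA.toLinearMap) (σ v ⊗ₜ a)
      _ = TensorProduct.assoc k (V ⊗[k] A) H H
            (TensorProduct.map (leftWhisker V Ψ) LinearMap.id
              (leftWhisker (V ⊗[k] H) Φ
                (TensorProduct.map σ αH.toLinearMap (σ v) ⊗ₜ αA a))) :=
        leftWhisker_assoc Ψ Φ _ _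
      _ = TensorProduct.assoc k (V ⊗[k] A) H H (TensorProduct.map (leftWhisker V Ψ) LinearMap.id
            (TensorProduct.map (TensorProduct.map σ αA.toLinearMap) αH.toLinearMap
              (leftWhisker V Φ (σ v ⊗ₜ a)))) := by
        rw [map_leftWhisker σ hΦ.1]
        rfl
      _ = TensorProduct.assoc k (V ⊗[k] A) H H (TensorProduct.map ρ αH.toLinearMap
            (ρ (v ⊗ₜ a))) := by
        rw [← h_iterate, ← leftWhisker_map_comp]
        rfl

theorem IsHomComodule.tensorCoaction (hV : IsHomComodule k αH Δ ε αV σ)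
    (hΦ : IsHomEntwining k αA μ e αH Δ ε Φ) :
    IsHomComodule k αH Δ ε (TensorProduct.congr αV αA)
      (tensorCoaction (TensorProduct.map αA.toLinearMap LinearMap.id ∘ₗ Φ) σ) := by
  obtain ⟨hV_structure, hV_coassoc, hV_counit⟩ := hV
  refine ⟨fun t => ?_, tensorCoaction_coassoc hΦ hV_coassoc, fun t => ?_⟩
  · refine (map_tensorCoaction ?_ hV_structure t).symm
    rw [LinearMap.comp_assoc, ← hΦ.1, ← LinearMap.comp_assoc, ← LinearMap.comp_assoc,
      ← TensorProduct.map_comp, ← TensorProduct.map_comp, LinearMap.comp_id, LinearMap.id_comp]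
  · have h_counit : TensorProduct.map LinearMap.id ε
          ∘ₗ (TensorProduct.map αA.toLinearMap LinearMap.id ∘ₗ Φ)
        = (TensorProduct.comm k k A).toLinearMap ∘ₗ TensorProduct.map ε αA.toLinearMap := by
      rw [← LinearMap.comp_assoc, ← TensorProduct.map_comp, LinearMap.id_comp, LinearMap.comp_id,
        ← LinearMap.id_comp ε, ← LinearMap.comp_id αA.toLinearMap, TensorProduct.map_comp,
        LinearMap.comp_assoc, hΦ.counit_comp, LinearMap.id_comp, LinearMap.comp_id]
      exact TensorProduct.ext' fun h a => by simp
    induction t using TensorProduct.induction_on with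
    | zero => simp
    | add s t hs ht => simp only [map_add, hs, ht]
    | tmul v a =>
      rw [← TensorProduct.map_id]
      simp only [_root_.tensorCoaction, LinearMap.comp_apply, TensorProduct.map_tmul,
        map_leftWhisker LinearMap.id h_counit, rid_leftWhisker_comm, hV_counit,
        TensorProduct.congr_tmul, LinearEquiv.coe_coe, LinearMap.id_apply]

theorem lift_tensorAction_comp_map (hμ : ∀ a b, αA (μ a b) = μ (αA a) (αA b)) :
    (TensorProduct.lift (tensorAction αV (μ.compl₂ αA.symm.toLinearMap))
          ∘ₗ TensorProduct.map LinearMap.id αA.toLinearMap)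
        ∘ₗ TensorProduct.map (TensorProduct.map LinearMap.id αA.toLinearMap) αA.toLinearMap
      = TensorProduct.map LinearMap.id αA.toLinearMap
        ∘ₗ TensorProduct.map αV.toLinearMap (TensorProduct.lift μ)
        ∘ₗ (TensorProduct.assoc k V A A).toLinearMap := by
  refine TensorProduct.ext_threefold fun v a b => ?_
  simp [tensorAction_tmul, hμ]

theorem tensorCoaction_tensorAction (hμ : ∀ a b, αA (μ a b) = μ (αA a) (αA b))
    (hΦ : IsHomEntwining k αA μ e αH Δ ε Φ)
    (hσ : ∀ v, σ (αV v) = TensorProduct.map αV.toLinearMap αH.toLinearMap (σ v))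
    (t : V ⊗[k] A) (x : A) :
    let act := tensorAction αV (μ.compl₂ αA.symm.toLinearMap)
    let ρ := tensorCoaction (TensorProduct.map αA.toLinearMap LinearMap.id ∘ₗ Φ) σ
    ρ (act t x) = TensorProduct.map (TensorProduct.lift act ∘ₗ
          TensorProduct.map LinearMap.id αA.toLinearMap) LinearMap.id
        (leftWhisker (V ⊗[k] A) (Φ ∘ₗ TensorProduct.map αH.toLinearMap LinearMap.id)
          (ρ t ⊗ₜ x)) := by
  intro act ρ
  obtain ⟨y, rfl⟩ := αA.surjective x
  induction t using TensorProduct.induction_on with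
  | zero => simp
  | add s t hs ht => simp only [map_add, LinearMap.add_apply, TensorProduct.add_tmul, hs, ht]
  | tmul v a =>
    set w := leftWhisker V Φ (σ v ⊗ₜ a)
    have h_coaction : ρ (v ⊗ₜ a)
        = TensorProduct.map (TensorProduct.map LinearMap.id αA.toLinearMap) LinearMap.id w :=
      leftWhisker_map_comp αA.toLinearMap LinearMap.id Φ (σ v ⊗ₜ a)
    have h_entwine : leftWhisker (V ⊗[k] A) (Φ ∘ₗ TensorProduct.map αH.toLinearMap LinearMap.id)
          (ρ (v ⊗ₜ a) ⊗ₜ αA y)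
        = TensorProduct.map
            (TensorProduct.map (TensorProduct.map LinearMap.id αA.toLinearMap) αA.toLinearMap)
            αH.toLinearMap (leftWhisker (V ⊗[k] A) Φ (w ⊗ₜ y)) := by
      rw [map_leftWhisker _ hΦ.1, leftWhisker_comp_map, h_coaction, TensorProduct.map_tmul,
        TensorProduct.map_tmul, TensorProduct.map_map]
      rfl
    calc ρ (act (v ⊗ₜ a) (αA y))
      _ = TensorProduct.map (TensorProduct.map LinearMap.id αA.toLinearMap) LinearMap.id
            (leftWhisker V Φ (σ (αV v) ⊗ₜ μ a y)) := by
        simp only [act, ρ, tensorAction_tmul, tensorCoaction, LinearMap.comp_apply,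
          TensorProduct.map_tmul, leftWhisker_map_comp, LinearMap.compl₂_apply,
          LinearEquiv.coe_coe, LinearEquiv.symm_apply_apply, LinearMap.id_apply]
      _ = _ := by
        rw [hσ, hΦ.leftWhisker_mul, h_entwine, TensorProduct.map_map, TensorProduct.map_map,
          lift_tensorAction_comp_map hμ]

theorem transportEntwining_zpow
    (hΦ : TensorProduct.map αA.toLinearMap αH.toLinearMap ∘ₗ Φ
      = Φ ∘ₗ TensorProduct.map αH.toLinearMap αA.toLinearMap) (n : ℤ) :
    transportEntwining (αA ^ n) Φ = TensorProduct.map LinearMap.id (αH ^ (-n)).toLinearMap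
      ∘ₗ Φ ∘ₗ TensorProduct.map (αH ^ n).toLinearMap LinearMap.id := by
  have h_semiconj : Function.Semiconj Φ (TensorProduct.congr αH αA) (TensorProduct.congr αA αH) :=
    fun t => (LinearMap.congr_fun hΦ t).symm
  have h_neg : αH ^ (-n) = (αH ^ n).symm := zpow_neg αH n
  refine TensorProduct.ext' fun h x => ?_
  obtain ⟨a, rfl⟩ := (αA ^ n).surjective x
  have h_zpow : Φ ((αH ^ n) h ⊗ₜ (αA ^ n) a)
      = TensorProduct.map (αA ^ n).toLinearMap (αH ^ n).toLinearMap (Φ (h ⊗ₜ a)) := by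
    have h_iterate := semiconj_linearEquiv_zpow h_semiconj n (h ⊗ₜ a)
    rwa [TensorProduct.congr_zpow, TensorProduct.congr_zpow] at h_iterate
  simp [transportEntwining_tmul, h_zpow, h_neg, TensorProduct.map_map]

theorem isHomEntwinedModule_iff_transportEntwining {ρ : U →ₗ[k] U ⊗[k] H}
    (hΦ : TensorProduct.map αA.toLinearMap αH.toLinearMap ∘ₗ Φ
      = Φ ∘ₗ TensorProduct.map αH.toLinearMap αA.toLinearMap) (n : ℤ) :
    IsHomEntwinedModule k αA μ e αH Δ ε Φ n αU act ρ ↔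
      IsHomModule k αA μ e αU act ∧ IsHomComodule k αH Δ ε αU ρ ∧
      ∀ u a, ρ (act u a) = TensorProduct.map (TensorProduct.lift act ∘ₗ
          TensorProduct.map LinearMap.id αA.toLinearMap) LinearMap.id
        (leftWhisker U (transportEntwining (αA ^ n) Φ
          ∘ₗ TensorProduct.map αH.toLinearMap LinearMap.id) (ρ u ⊗ₜ a)) := by
  have h_zpow : αH ^ (n + 1) = αH ^ n * αH := zpow_add_one αH n
  have h_entwine : transportEntwining (αA ^ n) Φ ∘ₗ TensorProduct.map αH.toLinearMap LinearMap.id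
      = TensorProduct.map LinearMap.id (αH ^ (-n)).toLinearMap
        ∘ₗ Φ ∘ₗ TensorProduct.map (αH ^ (n + 1)).toLinearMap LinearMap.id := by
    rw [transportEntwining_zpow hΦ, h_zpow, LinearMap.comp_assoc, LinearMap.comp_assoc,
      ← TensorProduct.map_comp, LinearMap.id_comp]
    rfl
  refine and_congr_right' (and_congr_right' (forall₂_congr fun u a => ?_))
  rw [h_entwine, leftWhisker_map_comp, TensorProduct.map_map, TensorProduct.map_id,
    LinearMap.comp_id, LinearMap.id_comp]
  rfl

theorem tensor_HA_isHomEntwinedModule_general (hA : IsHomAlgebra k αA μ e)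
    (hV : IsHomComodule k αH Δ ε αV σ) (hΦ : IsHomEntwining k αA μ e αH Δ ε Φ) (n : ℤ) :
    IsHomEntwinedModule k αA μ e αH Δ ε Φ n (TensorProduct.congr αV αA)
      (tensorAction αV (μ.compl₂ αA.symm.toLinearMap))
      (tensorCoaction (TensorProduct.map (αA ^ (n + 1)).toLinearMap LinearMap.id ∘ₗ Φ
        ∘ₗ TensorProduct.map LinearMap.id (αA ^ (-n)).toLinearMap) σ) := by
  have hΦn := hΦ.transportEntwining (hA.isHomAlgebraHom_zpow n)
  have h_coaction : TensorProduct.map (αA ^ (n + 1)).toLinearMap LinearMap.id ∘ₗ Φ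
        ∘ₗ TensorProduct.map LinearMap.id (αA ^ (-n)).toLinearMap
      = TensorProduct.map αA.toLinearMap LinearMap.id ∘ₗ transportEntwining (αA ^ n) Φ := by
    rw [add_comm, zpow_one_add, zpow_neg]
    refine TensorProduct.ext' fun h a => ?_
    simp only [LinearMap.comp_apply, transportEntwining, TensorProduct.map_map, LinearMap.comp_id]
    rfl
  rw [h_coaction, isHomEntwinedModule_iff_transportEntwining hΦ.1]
  have h_regular := hA.isHomModule_self.restrictScalars hA.isHomAlgebraHom_symm
  exact ⟨h_regular.tensorAction αV, hV.tensorCoaction hΦn,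
    tensorCoaction_tensorAction hA.1 hΦn hV.1⟩

end HomEntwining

/-- `H ⊗ A` with the given action and coaction is an `n`-th
Hom-entwined module. -/
theorem tensor_HA_isHomEntwinedModule
    {A H : Type*} [AddCommGroup A] [Module k A] [AddCommGroup H] [Module k H]
    (αA : A ≃ₗ[k] A) (μ : A →ₗ[k] A →ₗ[k] A) (e : A)
    (αH : H ≃ₗ[k] H) (Δ : H →ₗ[k] H ⊗[k] H) (ε : H →ₗ[k] k)
    (hA : IsHomAlgebra k αA μ e) (hH : IsHomCoalgebra k αH Δ ε)
    (Φ : H ⊗[k] A →ₗ[k] A ⊗[k] H)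
    (hΦ : IsHomEntwining k αA μ e αH Δ ε Φ) (n : ℤ) :
    IsHomEntwinedModule k αA μ e αH Δ ε Φ n
      (TensorProduct.congr αH αA)
      ((TensorProduct.mk k (H ⊗[k] A) A).compr₂
        (TensorProduct.map αH.toLinearMap
            (TensorProduct.lift μ ∘ₗ
              TensorProduct.map (LinearMap.id : A →ₗ[k] A) αA.symm.toLinearMap)
          ∘ₗ (TensorProduct.assoc k H A A).toLinearMap))
      ((TensorProduct.assoc k H A H).symm.toLinearMap
        ∘ₗ TensorProduct.map (LinearMap.id : H →ₗ[k] H)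
            (TensorProduct.map ((αA ^ (n + 1)).toLinearMap) (LinearMap.id : H →ₗ[k] H)
              ∘ₗ Φ ∘ₗ TensorProduct.map (LinearMap.id : H →ₗ[k] H)
                  ((αA ^ (-n)).toLinearMap))
        ∘ₗ (TensorProduct.assoc k H H A).toLinearMap
        ∘ₗ TensorProduct.map Δ (LinearMap.id : A →ₗ[k] A)) := by
  rw [← LinearMap.comp_id μ, TensorProduct.lift_comp_map]
  exact tensor_HA_isHomEntwinedModule_general hA hH.isHomComodule_self hΦ n
end
end

section
/- Let (H, α_H) be a Hom-bialgebra over a field k and n ∈ ℤ. Then the linear map Φ : H⊗H → H⊗H defined by Φ(h⊗g) = α_H^{-1}(g₁) ⊗ α_H^{-1}(h) α_H^{n}(g₂) is a Hom-entwining map, i.e. (H,H,Φ) is a Hom-entwining structure, where the first tensor factor H plays the role of the Hom-coalgebra and the second the role of the Hom-algebra. -/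
open TensorProduct BigOperators

noncomputable section

variable (k : Type*) [Field k]

/-!
The map `Φ` is an instance of the Doi–Koppinen construction. If `H` coacts on a Hom-algebra `A`
and acts on a Hom-coalgebra `C`, compatibly with their structures, then
`c ⊗ a ↦ α_A⁻¹(a₍₀₎) ⊗ α_C⁻¹(c) · a₍₁₎` is a Hom-entwining map: (E1) is multiplicativity of the
coaction together with associativity of the action, (E2) is comultiplicativity of the action
together with coassociativity of the coaction, and in both the inverse structure maps absorb the
twists by `α`. A Hom-bialgebra coacts on itself by `Δ` and acts on itself by `μ`, and since `αⁿ` is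
a bialgebra automorphism, the action may be replaced by its restriction along `αⁿ`.
-/

section TensorProduct

variable {R : Type*} [CommSemiring R] {M N P Q S T U V : Type*}
variable [AddCommMonoid M] [Module R M] [AddCommMonoid N] [Module R N]
variable [AddCommMonoid P] [Module R P] [AddCommMonoid Q] [Module R Q]
variable [AddCommMonoid S] [Module R S] [AddCommMonoid T] [Module R T]
variable [AddCommMonoid U] [Module R U] [AddCommMonoid V] [Module R V]

theorem map_lift_lift_tensorTensorTensorComm (f : M →ₗ[R] P →ₗ[R] V) (g : N →ₗ[R] Q →ₗ[R] S)
    (x : M ⊗[R] N) (y : P ⊗[R] Q) :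
    map (lift f) (lift g) (tensorTensorTensorComm R M N P Q (x ⊗ₜ y)) = map₂ f g x y := by
  have maps_eq : map (lift f) (lift g) ∘ₗ (tensorTensorTensorComm R M N P Q).toLinearMap
      = lift (map₂ f g) := by
    ext
    simp
  exact LinearMap.congr_fun maps_eq (x ⊗ₜ y)

theorem map_lift_assoc_symm_tmul (f : M →ₗ[R] N →ₗ[R] Q) (g : P →ₗ[R] V) (m : M)
    (y : N ⊗[R] P) :
    map (lift f) g ((TensorProduct.assoc R M N P).symm (m ⊗ₜ y)) = map (f m) g y := by
  have maps_eq : map (lift f) g ∘ₗ (TensorProduct.assoc R M N P).symm.toLinearMap ∘ₗ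
      mk R M (N ⊗[R] P) m = map (f m) g := by
    ext
    simp
  exact LinearMap.congr_fun maps_eq y

theorem map₂_compl₂ (f : M →ₗ[R] P →ₗ[R] V) (g : N →ₗ[R] Q →ₗ[R] S) (φ : U →ₗ[R] P)
    (ψ : T →ₗ[R] Q) (x : M ⊗[R] N) (y : U ⊗[R] T) :
    map₂ (f.compl₂ φ) (g.compl₂ ψ) x y = map₂ f g x (map φ ψ y) := by
  have maps_eq : map₂ (f.compl₂ φ) (g.compl₂ ψ) = (map₂ f g).compl₂ (map φ ψ) := by
    ext
    simp
  exact LinearMap.congr_fun₂ maps_eq x y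

theorem tensorProduct_rid_map (f : M →ₗ[R] N) (φ : P →ₗ[R] R) (x : M ⊗[R] P) :
    TensorProduct.rid R N (map f φ x) = f (TensorProduct.rid R M (map LinearMap.id φ x)) := by
  have maps_eq : (TensorProduct.rid R N).toLinearMap ∘ₗ map f φ
      = f ∘ₗ (TensorProduct.rid R M).toLinearMap ∘ₗ map LinearMap.id φ := by
    ext
    simp
  exact LinearMap.congr_fun maps_eq x

theorem comul_symm_apply {ΔM : M →ₗ[R] M ⊗[R] M} {ΔN : N →ₗ[R] N ⊗[R] N} (f : M ≃ₗ[R] N)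
    (hf : ∀ m, ΔN (f m) = map f.toLinearMap f.toLinearMap (ΔM m)) (n : N) :
    ΔM (f.symm n) = map f.symm.toLinearMap f.symm.toLinearMap (ΔN n) := by
  obtain ⟨m, rfl⟩ := f.surjective n
  simp [hf, map_map]

end TensorProduct

section DoiKoppinen

variable {k}
variable {A C D H K : Type*}
variable [AddCommGroup A] [Module k A] [AddCommGroup C] [Module k C]
variable [AddCommGroup D] [Module k D] [AddCommGroup H] [Module k H]
variable [AddCommGroup K] [Module k K]

/-- A morphism of Hom-bialgebras, on unbundled structure maps. -/
structure IsHomBialgebraMap (αH : H ≃ₗ[k] H) (μH : H →ₗ[k] H →ₗ[k] H) (eH : H)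
    (ΔH : H →ₗ[k] H ⊗[k] H) (εH : H →ₗ[k] k)
    (αK : K ≃ₗ[k] K) (μK : K →ₗ[k] K →ₗ[k] K) (eK : K)
    (ΔK : K →ₗ[k] K ⊗[k] K) (εK : K →ₗ[k] k) (f : H →ₗ[k] K) : Prop where
  map_struct : ∀ h, f (αH h) = αK (f h)
  map_mul : ∀ h g, f (μH h g) = μK (f h) (f g)
  map_one : f eH = eK
  map_comul : ∀ h, ΔK (f h) = map f f (ΔH h)
  map_counit : ∀ h, εK (f h) = εH h

namespace IsHomBialgebraMap

variable {αH : H ≃ₗ[k] H} {μH : H →ₗ[k] H →ₗ[k] H} {eH : H}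
  {ΔH : H →ₗ[k] H ⊗[k] H} {εH : H →ₗ[k] k}
  {αK : K ≃ₗ[k] K} {μK : K →ₗ[k] K →ₗ[k] K} {eK : K}
  {ΔK : K →ₗ[k] K ⊗[k] K} {εK : K →ₗ[k] k}
  {αD : D ≃ₗ[k] D} {μD : D →ₗ[k] D →ₗ[k] D} {eD : D}
  {ΔD : D →ₗ[k] D ⊗[k] D} {εD : D →ₗ[k] k}

theorem id : IsHomBialgebraMap αH μH eH ΔH εH αH μH eH ΔH εH LinearMap.id where
  map_struct _ := rfl
  map_mul _ _ := rfl
  map_one := rfl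
  map_comul _ := by simp
  map_counit _ := rfl

theorem comp {g : K →ₗ[k] D} {f : H →ₗ[k] K}
    (hg : IsHomBialgebraMap αK μK eK ΔK εK αD μD eD ΔD εD g)
    (hf : IsHomBialgebraMap αH μH eH ΔH εH αK μK eK ΔK εK f) :
    IsHomBialgebraMap αH μH eH ΔH εH αD μD eD ΔD εD (g ∘ₗ f) where
  map_struct h := by simp [hf.map_struct, hg.map_struct]
  map_mul h h' := by simp [hf.map_mul, hg.map_mul]
  map_one := by simp [hf.map_one, hg.map_one]
  map_comul h := by simp [hf.map_comul, hg.map_comul, map_map]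
  map_counit h := by simp [hf.map_counit, hg.map_counit]

theorem symm {f : H ≃ₗ[k] K}
    (hf : IsHomBialgebraMap αH μH eH ΔH εH αK μK eK ΔK εK f.toLinearMap) :
    IsHomBialgebraMap αK μK eK ΔK εK αH μH eH ΔH εH f.symm.toLinearMap where
  map_struct x := f.symm_apply_eq.2 (by simpa using (hf.map_struct (f.symm x)).symm)
  map_mul x y := f.symm_apply_eq.2 (by simpa using (hf.map_mul (f.symm x) (f.symm y)).symm)
  map_one := f.symm_apply_eq.2 hf.map_one.symm
  map_comul := comul_symm_apply f hf.map_comul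
  map_counit x := by simpa using (hf.map_counit (f.symm x)).symm

end IsHomBialgebraMap

/-- The group of Hom-bialgebra automorphisms, as a subgroup of the linear automorphisms. -/
def homBialgebraAut (α : H ≃ₗ[k] H) (μ : H →ₗ[k] H →ₗ[k] H) (e : H)
    (Δ : H →ₗ[k] H ⊗[k] H) (ε : H →ₗ[k] k) : Subgroup (H ≃ₗ[k] H) where
  carrier := {β | IsHomBialgebraMap α μ e Δ ε α μ e Δ ε β.toLinearMap}
  one_mem' := .id
  mul_mem' hβ hγ := hβ.comp hγ
  inv_mem' hβ := hβ.symm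

namespace IsHomBialgebra

variable {α : H ≃ₗ[k] H} {μ : H →ₗ[k] H →ₗ[k] H} {e : H}
  {Δ : H →ₗ[k] H ⊗[k] H} {ε : H →ₗ[k] k}

theorem isHomBialgebraMap_zpow (hH : IsHomBialgebra k α μ e Δ ε) (n : ℤ) :
    IsHomBialgebraMap α μ e Δ ε α μ e Δ ε (α ^ n).toLinearMap := by
  obtain ⟨⟨map_mul, -, map_one, -⟩, ⟨map_comul, map_counit, -⟩, -⟩ := hH
  have hα : α ∈ homBialgebraAut α μ e Δ ε :=
    ⟨fun _ => rfl, map_mul, map_one, map_comul, map_counit⟩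
  exact zpow_mem hα n

theorem isHomComoduleAlgebra_self (hH : IsHomBialgebra k α μ e Δ ε) :
    IsHomComoduleAlgebra k α μ e Δ ε α μ e Δ := by
  obtain ⟨hA, ⟨map_comul, -, coassoc, -, counit_right⟩, comul_mul, comul_one, -⟩ := hH
  exact ⟨hA, ⟨map_comul, coassoc, counit_right⟩, comul_mul, comul_one⟩

theorem isHomModuleCoalgebra_self (hH : IsHomBialgebra k α μ e Δ ε) :
    IsHomModuleCoalgebra k α μ e Δ ε α Δ ε μ := by
  obtain ⟨⟨map_mul, mul_assoc, -, -, mul_one⟩, hC, comul_mul, -, counit_mul, -⟩ := hH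
  exact ⟨hC, ⟨map_mul, mul_one, fun a b c => (mul_assoc a b c).symm⟩, comul_mul, counit_mul⟩

end IsHomBialgebra

variable {αH : H ≃ₗ[k] H} {μH : H →ₗ[k] H →ₗ[k] H} {eH : H}
  {ΔH : H →ₗ[k] H ⊗[k] H} {εH : H →ₗ[k] k}
  {αK : K ≃ₗ[k] K} {μK : K →ₗ[k] K →ₗ[k] K} {eK : K}
  {ΔK : K →ₗ[k] K ⊗[k] K} {εK : K →ₗ[k] k}
  {αA : A ≃ₗ[k] A} {μA : A →ₗ[k] A →ₗ[k] A} {eA : A} {ρ : A →ₗ[k] A ⊗[k] H}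
  {αC : C ≃ₗ[k] C} {ΔC : C →ₗ[k] C ⊗[k] C} {εC : C →ₗ[k] k}

theorem IsHomModule.restrictScalars_s11 {act : C →ₗ[k] K →ₗ[k] C} {f : H →ₗ[k] K}
    (hC : IsHomModule k αK μK eK αC act) (map_struct : ∀ h, f (αH h) = αK (f h))
    (map_mul : ∀ h g, f (μH h g) = μK (f h) (f g)) (map_one : f eH = eK) :
    IsHomModule k αH μH eH αC (act.compl₂ f) := by
  obtain ⟨map_act, act_one, act_act⟩ := hC
  refine ⟨fun c h => ?_, fun c => ?_, fun c h g => ?_⟩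
  · simp [map_act, map_struct]
  · simp [act_one, map_one]
  · simp [act_act, map_struct, map_mul]

theorem IsHomModuleCoalgebra.restrictScalars_s11 {act : C →ₗ[k] K →ₗ[k] C} {f : H →ₗ[k] K}
    (hC : IsHomModuleCoalgebra k αK μK eK ΔK εK αC ΔC εC act)
    (hf : IsHomBialgebraMap αH μH eH ΔH εH αK μK eK ΔK εK f) :
    IsHomModuleCoalgebra k αH μH eH ΔH εH αC ΔC εC (act.compl₂ f) := by
  obtain ⟨hcoalg, hmod, comul_act, counit_act⟩ := hC
  refine ⟨hcoalg, hmod.restrictScalars_s11 hf.map_struct hf.map_mul hf.map_one,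
    fun c h => ?_, fun c h => ?_⟩
  · rw [map_lift_lift_tensorTensorTensorComm, map₂_compl₂, LinearMap.compl₂_apply, comul_act,
      map_lift_lift_tensorTensorTensorComm, hf.map_comul]
  · rw [LinearMap.compl₂_apply, counit_act, hf.map_counit]

/-- The Doi–Koppinen map `c ⊗ a ↦ α_A⁻¹(a₍₀₎) ⊗ α_C⁻¹(c) · a₍₁₎` of a coaction `ρ` of `H` on `A`
and an action of `H` on `C`. -/
def doiKoppinenMap (αA : A ≃ₗ[k] A) (αC : C ≃ₗ[k] C) (ρ : A →ₗ[k] A ⊗[k] H)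
    (act : C →ₗ[k] H →ₗ[k] C) : C ⊗[k] A →ₗ[k] A ⊗[k] C :=
  map αA.symm.toLinearMap (lift (act ∘ₗ αC.symm.toLinearMap))
    ∘ₗ (leftComm k C A H).toLinearMap ∘ₗ map LinearMap.id ρ

variable {act : C →ₗ[k] H →ₗ[k] C}

theorem doiKoppinenMap_tmul (c : C) (a : A) :
    doiKoppinenMap αA αC ρ act (c ⊗ₜ a) = map αA.symm.toLinearMap (act (αC.symm c)) (ρ a) := by
  have maps_eq : map αA.symm.toLinearMap (lift (act ∘ₗ αC.symm.toLinearMap))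
      ∘ₗ (leftComm k C A H).toLinearMap ∘ₗ mk k C (A ⊗[k] H) c
      = map αA.symm.toLinearMap (act (αC.symm c)) := by
    ext
    simp
  exact LinearMap.congr_fun maps_eq (ρ a)

theorem doiKoppinenMap_struct_tmul
    (hA : IsHomComodule k αH ΔH εH αA ρ) (hC : IsHomModule k αH μH eH αC act) (c : C) (a : A) :
    doiKoppinenMap αA αC ρ act (αC c ⊗ₜ αA a)
      = map αA.toLinearMap αC.toLinearMap (doiKoppinenMap αA αC ρ act (c ⊗ₜ a)) := by
  have act_comp : act c ∘ₗ αH.toLinearMap = αC.toLinearMap ∘ₗ act (αC.symm c) := by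
    ext h
    simp [hC.1]
  simp [doiKoppinenMap_tmul, hA.1, map_map, act_comp]

theorem doiKoppinenMap_struct_tmul_mul
    (hA : IsHomComoduleAlgebra k αH μH eH ΔH εH αA μA eA ρ)
    (hC : IsHomModule k αH μH eH αC act) (c : C) (a b : A) :
    doiKoppinenMap αA αC ρ act (αC c ⊗ₜ μA a b)
      = map (lift μA) αC.toLinearMap ((TensorProduct.assoc k A A C).symm
          (map LinearMap.id (doiKoppinenMap αA αC ρ act)
            (TensorProduct.assoc k A C A (doiKoppinenMap αA αC ρ act (c ⊗ₜ a) ⊗ₜ b)))) := by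
  obtain ⟨⟨map_mul, -⟩, -, coact_mul, -⟩ := hA
  obtain ⟨map_act, -, act_act⟩ := hC
  rw [doiKoppinenMap_tmul, doiKoppinenMap_tmul, coact_mul, LinearEquiv.symm_apply_apply,
    map_lift_lift_tensorTensorTensorComm]
  induction ρ a with
  | zero => simp
  | add x y hx hy => simp only [map_add, LinearMap.add_apply, add_tmul, hx, hy]
  | tmul a₀ a₁ =>
    have symm_mul : αA.symm.toLinearMap ∘ₗ μA a₀ = μA (αA.symm a₀) ∘ₗ αA.symm.toLinearMap := by
      ext b
      simp [LinearEquiv.symm_apply_eq, map_mul]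
    have act_mul : act c ∘ₗ μH a₁
        = αC.toLinearMap ∘ₗ act (αC.symm (act (αC.symm c) a₁)) := by
      ext h
      simp [map_act, act_act]
    simp [doiKoppinenMap_tmul, map_lift_assoc_symm_tmul, map_map, symm_mul, act_mul]

theorem map_comul_doiKoppinenMap
    (hA : IsHomComodule k αH ΔH εH αA ρ)
    (hC : IsHomModuleCoalgebra k αH μH eH ΔH εH αC ΔC εC act) (c : C) (a : A) :
    map αA.toLinearMap ΔC (doiKoppinenMap αA αC ρ act (c ⊗ₜ a))
      = map αA.symm.toLinearMap
          (map₂ act act (map αC.symm.toLinearMap αC.symm.toLinearMap (ΔC c)))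
          (TensorProduct.assoc k A H H (map ρ αH.toLinearMap (ρ a))) := by
  obtain ⟨-, coassoc, -⟩ := hA
  obtain ⟨⟨map_comul, -⟩, -, comul_act, -⟩ := hC
  have comul_comp_act : ΔC ∘ₗ act (αC.symm c)
      = map₂ act act (map αC.symm.toLinearMap αC.symm.toLinearMap (ΔC c)) ∘ₗ ΔH := by
    ext h
    rw [LinearMap.comp_apply, comul_act, map_lift_lift_tensorTensorTensorComm,
      comul_symm_apply αC map_comul, LinearMap.comp_apply]
  rw [← coassoc, doiKoppinenMap_tmul, map_map, map_map, comul_comp_act]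
  simp

theorem assoc_map_doiKoppinenMap
    (hA : IsHomComodule k αH ΔH εH αA ρ) (z : C ⊗[k] C) (a : A) :
    TensorProduct.assoc k A C C (map (doiKoppinenMap αA αC ρ act) LinearMap.id
        ((TensorProduct.assoc k C A C).symm (map LinearMap.id (doiKoppinenMap αA αC ρ act)
          (TensorProduct.assoc k C C A (z ⊗ₜ αA a)))))
      = map αA.symm.toLinearMap
          (map₂ act act (map αC.symm.toLinearMap αC.symm.toLinearMap z))
          (TensorProduct.assoc k A H H (map ρ αH.toLinearMap (ρ a))) := by
  induction z with
  | zero => simp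
  | add x y hx hy => simp only [map_add, map_add_right, LinearMap.add_apply, add_tmul, hx, hy]
  | tmul c₁ c₂ =>
    simp only [assoc_tmul, map_tmul, doiKoppinenMap_tmul, hA.1]
    induction ρ a with
    | zero => simp
    | add x y hx hy => simp only [map_add, tmul_add, hx, hy]
    | tmul a₀ a₁ => simp [doiKoppinenMap_tmul, map_map_assoc]

theorem rid_map_counit_doiKoppinenMap
    (hA : IsHomComodule k αH ΔH εH αA ρ)
    (hC : IsHomModuleCoalgebra k αH μH eH ΔH εH αC ΔC εC act) (c : C) (a : A) :
    TensorProduct.rid k A (map LinearMap.id εC (doiKoppinenMap αA αC ρ act (c ⊗ₜ a)))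
      = εC c • a := by
  obtain ⟨-, -, counit_right⟩ := hA
  obtain ⟨⟨-, map_counit, -⟩, -, -, counit_act⟩ := hC
  have counit_symm : εC (αC.symm c) = εC c := by
    simpa using (map_counit (αC.symm c)).symm
  have counit_comp_act : εC ∘ₗ act (αC.symm c) = εC c • εH := by
    ext h
    simp [counit_act, counit_symm]
  rw [doiKoppinenMap_tmul, map_map, LinearMap.id_comp, counit_comp_act, map_smul_right,
    LinearMap.smul_apply, map_smul, tensorProduct_rid_map, counit_right]
  simp

theorem doiKoppinenMap_tmul_one
    (hA : IsHomComoduleAlgebra k αH μH eH ΔH εH αA μA eA ρ)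
    (hC : IsHomModule k αH μH eH αC act) (c : C) :
    doiKoppinenMap αA αC ρ act (c ⊗ₜ eA) = eA ⊗ₜ c := by
  obtain ⟨⟨-, -, map_one, -⟩, -, -, coact_one⟩ := hA
  have symm_one : αA.symm eA = eA := αA.symm_apply_eq.2 map_one.symm
  simp [doiKoppinenMap_tmul, coact_one, symm_one, hC.2.1]

theorem isHomEntwining_doiKoppinenMap
    (hA : IsHomComoduleAlgebra k αH μH eH ΔH εH αA μA eA ρ)
    (hC : IsHomModuleCoalgebra k αH μH eH ΔH εH αC ΔC εC act) :
    IsHomEntwining k αA μA eA αC ΔC εC (doiKoppinenMap αA αC ρ act) := by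
  refine ⟨?_, ?_, ?_, ?_, doiKoppinenMap_tmul_one hA hC.2.1⟩
  · ext c a
    exact (doiKoppinenMap_struct_tmul hA.2.1 hC.2.1 c a).symm
  · ext c a b
    exact (doiKoppinenMap_struct_tmul_mul hA hC.2.1 c a b).symm
  · ext c a
    exact (map_comul_doiKoppinenMap hA.2.1 hC c a).trans
      (assoc_map_doiKoppinenMap hA.2.1 (ΔC c) a).symm
  · ext c a
    exact rid_map_counit_doiKoppinenMap hA.2.1 hC c a

theorem homBialgebra_canonical_homEntwining_general
    {actK : C →ₗ[k] K →ₗ[k] C} {f : H →ₗ[k] K}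
    (hA : IsHomComoduleAlgebra k αH μH eH ΔH εH αA μA eA ρ)
    (hC : IsHomModuleCoalgebra k αK μK eK ΔK εK αC ΔC εC actK)
    (hf : IsHomBialgebraMap αH μH eH ΔH εH αK μK eK ΔK εK f) :
    IsHomEntwining k αA μA eA αC ΔC εC
      (map αA.symm.toLinearMap (lift actK ∘ₗ map αC.symm.toLinearMap f)
        ∘ₗ (leftComm k C A H).toLinearMap ∘ₗ map LinearMap.id ρ) := by
  have lift_restrict : lift actK ∘ₗ map αC.symm.toLinearMap f
      = lift (actK.compl₂ f ∘ₗ αC.symm.toLinearMap) := by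
    ext
    simp
  rw [lift_restrict]
  exact isHomEntwining_doiKoppinenMap hA (hC.restrictScalars_s11 hf)

end DoiKoppinen

/-- for a Hom-bialgebra `H` and `n ∈ ℤ`, the map
`Φ(h ⊗ g) = α⁻¹(g₁) ⊗ α⁻¹(h) αⁿ(g₂)` is a Hom-entwining map. -/
theorem homBialgebra_canonical_homEntwining
    {H : Type*} [AddCommGroup H] [Module k H]
    (αH : H ≃ₗ[k] H) (μ : H →ₗ[k] H →ₗ[k] H) (e : H)
    (Δ : H →ₗ[k] H ⊗[k] H) (ε : H →ₗ[k] k)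
    (hH : IsHomBialgebra k αH μ e Δ ε) (n : ℤ) :
    IsHomEntwining k αH μ e αH Δ ε
      (TensorProduct.map αH.symm.toLinearMap
          (TensorProduct.lift μ ∘ₗ
            TensorProduct.map αH.symm.toLinearMap ((αH ^ n).toLinearMap))
        ∘ₗ (TensorProduct.leftComm k H H H).toLinearMap
        ∘ₗ TensorProduct.map (LinearMap.id : H →ₗ[k] H) Δ) :=
  homBialgebra_canonical_homEntwining_general hH.isHomComoduleAlgebra_self
    hH.isHomModuleCoalgebra_self (hH.isHomBialgebraMap_zpow n)
end
end
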